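/- arXiv:1412.6803 — 2 statements merged into one kernel-verified Lean document; each statement's English description precedes it below -/
import Mathlib

section
/- Let G be a finite simple graph with maximum average degree mad(G) < 5 whose maximum degree satisfies Δ(G) ≥ 9 or Δ(G) ≤ 5. Then χ_i(G) ≤ Δ(G) + 5. -/
open SimpleGraph

/-- An incidence coloring of `G` with `n` colors, where `φ v u` is the color of the
incidence `(v, vu)` (meaningful when `G.Adj v u`): two distinct adjacent incidences
`(v, vu)` and `(w, wx)` receive distinct colors. Incidences `(v, e)` and `(w, f)` are
adjacent if `v = w`, or `e = f`, or the edge `vw` equals `e` or `f`. -/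
def IsIncidenceColoring {V : Type*} (G : SimpleGraph V) {n : ℕ} (φ : V → V → Fin n) : Prop :=
  ∀ ⦃v u w x : V⦄, G.Adj v u → G.Adj w x → (v, u) ≠ (w, x) →
    (v = w ∨ s(v, u) = s(w, x) ∨ s(v, w) = s(v, u) ∨ s(v, w) = s(w, x)) →
    φ v u ≠ φ w x

/-- `G` admits an incidence `(n, ℓ)`-coloring: an incidence coloring with `n` colors such
that for every vertex `v`, at most `ℓ` distinct colors appear on the incidences of the
form `(u, uv)` where `u` ranges over the neighbors of `v`. -/
def HasIncidenceColoring {V : Type*} (G : SimpleGraph V) (n ℓ : ℕ) : Prop :=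
  ∃ φ : V → V → Fin n, IsIncidenceColoring G φ ∧
    ∀ v : V, ({c : Fin n | ∃ u : V, G.Adj u v ∧ φ u v = c}).ncard ≤ ℓ

/-- The incidence chromatic number: the least `n` such that `G` admits an incidence
`n`-coloring. -/
noncomputable def incChromaticNumber {V : Type*} (G : SimpleGraph V) : ℕ :=
  sInf {n : ℕ | ∃ φ : V → V → Fin n, IsIncidenceColoring G φ}

/-- `mad(G) < q`: every nonempty subgraph `H` of `G` satisfies `2|E(H)| < q·|V(H)|`. -/
def MadLT {V : Type*} (G : SimpleGraph V) (q : ℝ) : Prop :=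
  ∀ H : G.Subgraph, H.verts.Nonempty →
    (2 * H.edgeSet.ncard : ℝ) < q * H.verts.ncard
/-!
View the incidence `(v, vu)` as the arc from `v` to `u`: in an incidence coloring the arcs leaving
a vertex receive distinct colors, and no color both enters and leaves a vertex. Let `D` bound the
degrees. Delete the edges at a vertex `w` with at most four neighbors, color the remaining graph
with `D + 5` colors by induction, and color the arcs at `w` from lists of the colors still free at
its neighbors.

For `D ≤ 5` this fails only if `w` has four neighbors, all with the same six colors not leaving
them. The induction therefore proves more: the set of colors leaving a vertex with at most four
neighbors can be made to differ from the set of colors leaving any other prescribed vertex.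
Applying this to two neighbors of `w` excludes the bad case.

For `9 ≤ D` the induction keeps the number of colors entering each vertex at most four: every
neighbor `j` of `w` reserves four colors for its entering arcs, among them those already entering
it, which leaves `D + 2 - deg j` colors for the arc from `j` to `w`. This succeeds if `w` has few
neighbors of degree at least `D - 1`. Such a vertex exists, since otherwise all degrees are at least
four and every vertex of degree four has three neighbors of degree at least eight; each of the
latter can give `1 / 3` to all its neighbors and keep `5`, so the average degree is at least `5`.
-/

/-! ### Coloring the arcs at a new vertex from lists -/

/-- A choice of colors for the arcs between a new vertex and its neighbors, which are indexed
by `ι`: the arc from the neighbor `j` receives `x j ∈ F j`, the arc to it `y j ∈ L j`. -/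
structure IsExtension {ι C : Type*} (F L : ι → Set C) (x y : ι → C) : Prop where
  left_mem : ∀ j, x j ∈ F j
  right_mem : ∀ j, y j ∈ L j
  injective : Function.Injective y
  ne : ∀ i j, x i ≠ y j

section Extensions

open Set Function

variable {ι C : Type*} {F F' L L' : ι → Set C} {x y : ι → C}

theorem IsExtension.mono (h : IsExtension F L x y) (hF : ∀ j, F j ⊆ F' j)
    (hL : ∀ j, L j ⊆ L' j) : IsExtension F' L' x y :=
  ⟨fun j => hF j (h.left_mem j), fun j => hL j (h.right_mem j), h.injective, h.ne⟩

theorem IsExtension.update [DecidableEq ι] (h : IsExtension F L x y) {j : ι} {a : C}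
    (haL : a ∈ L j) (hax : a ∉ range x) (hay : a ∉ range y) :
    IsExtension F L x (update y j a) where
  left_mem := h.left_mem
  right_mem := (forall_update_iff y fun i b => b ∈ L i).2 ⟨haL, fun i _ => h.right_mem i⟩
  injective i k := by
    rw [mem_range, not_exists] at hay
    by_cases hij : i = j <;> by_cases hkj : k = j
    · exact fun _ => hij.trans hkj.symm
    · simpa [hij, hkj] using fun hk => (hay k hk.symm).elim
    · simpa [hij, hkj] using fun hi => hay i hi
    · simpa [hij, hkj] using fun hik => h.injective hik
  ne i := (forall_update_iff y fun _ b => x i ≠ b).2 ⟨fun hi => hax ⟨i, hi⟩, fun k _ => h.ne i k⟩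

theorem exists_isExtension_range_ne_of_pairwise_disjoint [Nonempty ι] (hFL : ∀ j, F j ⊆ L j)
    (hF : ∀ j, (F j).Nontrivial) (hdisj : Pairwise (Disjoint on F)) (Z : Set C) :
    ∃ x y, IsExtension F L x y ∧ range y ≠ Z := by
  choose p hp q hq hpq using hF
  have hswap : ∀ x y : ι → C, (∀ j, x j ∈ F j) → (∀ j, y j ∈ F j) → (∀ j, x j ≠ y j) →
      IsExtension F L x y := fun x y hx hy hxy =>
    ⟨hx, fun j => hFL j (hy j),
      fun i j hij => by_contra fun h => (hdisj h).ne_of_mem (hy i) (hy j) hij, fun i j => by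
        rcases eq_or_ne i j with rfl | h
        · exact hxy i
        · exact (hdisj h).ne_of_mem (hx i) (hy j)⟩
  have hpqE := hswap p q hp hq hpq
  have hqpE := hswap q p hq hp fun j => (hpq j).symm
  have hne : range p ≠ range q := fun h => by
    obtain ⟨j, hj⟩ : p (Classical.arbitrary ι) ∈ range q := h ▸ mem_range_self _
    exact hpqE.ne _ _ hj.symm
  by_cases hZ : range q = Z
  · exact ⟨q, p, hqpE, fun h => hne (h.trans hZ.symm)⟩
  · exact ⟨p, q, hpqE, hZ⟩

theorem image_update_of_mem [DecidableEq ι] {S : Set ι} {m : ι} (hm : m ∈ S) (p : C) :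
    update x m p '' S = insert p (x '' (S \ {m})) := by
  nth_rw 1 [← insert_sdiff_self_of_mem hm]
  rw [image_insert_eq, update_self, image_congr fun i hi => update_of_ne hi.2 p x]

variable [Finite ι]

theorem ncard_image_compl_singleton_add_two_le {i k m : ι} (hik : i ≠ k) (hmi : m ≠ i)
    (hmk : m ≠ k) (h : x i = x k) : (x '' {m}ᶜ).ncard + 2 ≤ Nat.card ι := by
  have hsub : x '' {m}ᶜ ⊆ x '' {m, i}ᶜ := by
    rintro _ ⟨j, hj, rfl⟩
    rcases eq_or_ne j i with rfl | hji
    · exact ⟨k, by simp [hmk.symm, hik.symm], h.symm⟩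
    · exact ⟨j, by simpa [hji] using hj, rfl⟩
  have himage := (ncard_le_ncard hsub).trans (ncard_image_le (toFinite _))
  have hcompl := ncard_compl_add_ncard {m, i}
  rw [ncard_pair hmi] at hcompl
  omega

variable [Finite C]

theorem exists_injective_or_exists_superset (S : ι → Set C)
    (h : ∀ s : Set ι, s ≠ univ → s.Nonempty → ∃ j ∈ s, s.ncard ≤ (S j).ncard) :
    (∃ y : ι → C, Injective y ∧ ∀ j, y j ∈ S j) ∨
      ∃ U : Set C, U.ncard < Nat.card ι ∧ ∀ j, S j ⊆ U := by
  classical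
  have := Fintype.ofFinite ι
  have := Fintype.ofFinite C
  by_cases hU : (⋃ j, S j).ncard < Nat.card ι
  · exact .inr ⟨_, hU, subset_iUnion S⟩
  have hall : ∀ s : Finset ι, s.card ≤ (s.biUnion fun j => (S j).toFinset).card := fun s => by
    have hunion : (s.biUnion fun j => (S j).toFinset).card = (⋃ j ∈ s, S j).ncard := by
      simp [← ncard_coe_finset]
    rw [hunion, ← ncard_coe_finset]
    rcases s.eq_empty_or_nonempty with rfl | hs
    · simp
    by_cases huniv : (s : Set ι) = univ
    · have hmem : ∀ j, j ∈ s := fun j => Finset.mem_coe.1 (huniv ▸ mem_univ j)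
      simpa [huniv, hmem, ncard_univ] using hU
    · obtain ⟨j, hj, hle⟩ := h s huniv hs
      exact hle.trans (ncard_le_ncard (subset_biUnion_of_mem (u := S) hj))
  obtain ⟨y, hy, hyS⟩ := (Finset.all_card_le_biUnion_card_iff_exists_injective _).1 hall
  exact .inl ⟨y, hy, fun j => mem_toFinset.1 (hyS j)⟩

theorem exists_isExtension_or_forall_eq_of_ncard_range_le (hι : Nat.card ι ≤ 4)
    (hL : ∀ j, 6 ≤ (L j).ncard) (hx : ∀ j, x j ∈ F j) (hX : (range x).ncard ≤ 3) :
    (∃ y, IsExtension F L x y) ∨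
      Nat.card ι = 4 ∧ ∃ U : Set C, U.ncard = 6 ∧ ∀ j, L j = U := by
  have hS : ∀ j, 3 ≤ (L j \ range x).ncard := fun j => by
    have := le_ncard_sdiff (range x) (L j)
    have := hL j
    omega
  rcases exists_injective_or_exists_superset (fun j => L j \ range x)
    (fun s hs hne => hne.imp fun j hj => ⟨hj, by
      have := ncard_lt_card hs
      have := hS j
      omega⟩) with ⟨y, hy, hyS⟩ | ⟨U, hU, hSU⟩
  · exact .inl ⟨y, hx, fun j => (hyS j).1, hy, fun i j hij => (hyS j).2 ⟨i, hij⟩⟩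
  · have : Nonempty ι := (Nat.card_pos_iff.1 (by omega)).1
    have hLU : ∀ j, L j ⊆ U ∪ range x := fun j =>
      (sdiff_subset_iff.1 (hSU j)).trans (union_comm _ _).subset
    have hUX := ncard_union_le U (range x)
    have hle := (hL (Classical.arbitrary ι)).trans (ncard_le_ncard (hLU _))
    exact .inr ⟨by omega, U ∪ range x, by omega, fun j =>
      eq_of_subset_of_ncard_le (hLU j) (by have := hL j; omega)⟩

theorem exists_isExtension_range_ne_or_subset_union (hι : Nat.card ι ≤ 4)
    (hL : ∀ j, 6 ≤ (L j).ncard)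
    (hne : Nat.card ι = 4 → ∀ U : Set C, U.ncard = 6 → ∃ j, L j ≠ U) (Z : Set C)
    (hx : ∀ j, x j ∈ F j) (hX : (range x).ncard ≤ 3) :
    (∃ y, IsExtension F L x y ∧ range y ≠ Z) ∨
      Z.ncard ≤ Nat.card ι ∧ ∀ j, L j ⊆ Z ∪ range x := by
  classical
  rcases exists_isExtension_or_forall_eq_of_ncard_range_le hι hL hx hX with
    ⟨y, hy⟩ | ⟨h4, U, hU, hLU⟩
  · by_contra! h
    obtain rfl := h.1 y hy
    obtain ⟨j, hj⟩ := h.2 (by rw [ncard_range_of_injective hy.injective])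
    obtain ⟨a, haL, ha⟩ := not_subset.1 hj
    rw [mem_union, not_or] at ha
    exact ha.1 (h.1 _ (hy.update haL ha.2 ha.1) ▸ ⟨j, update_self j a y⟩)
  · obtain ⟨j, hj⟩ := hne h4 U hU
    exact absurd (hLU j) hj

theorem exists_isExtension_range_ne_of_ncard_image_le [Nonempty ι] (hι : Nat.card ι ≤ 4)
    (hL : ∀ j, 6 ≤ (L j).ncard)
    (hne : Nat.card ι = 4 → ∀ U : Set C, U.ncard = 6 → ∃ j, L j ≠ U) (Z : Set C)
    (hx : ∀ j, x j ∈ F j) {m : ι} (hm : (F m).Nontrivial) (hA : (x '' {m}ᶜ).ncard ≤ 2) :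
    ∃ x y, IsExtension F L x y ∧ range y ≠ Z := by
  classical
  by_contra! h
  -- A failure with `x m = p` confines all lists to `Z ∪ range x`; comparing two values of `p`
  -- confines them to a set of at most `Nat.card ι + 2` colors.
  have hcover : ∀ p ∈ F m, Z.ncard ≤ Nat.card ι ∧ ∀ j, L j ⊆ Z ∪ insert p (x '' {m}ᶜ) :=
    fun p hp => by
      have hxp : ∀ j, update x m p j ∈ F j :=
        (forall_update_iff x fun j a => a ∈ F j).2 ⟨hp, fun j _ => hx j⟩
      have hrange : range (update x m p) = insert p (x '' {m}ᶜ) := by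
        rw [← image_univ, image_update_of_mem (mem_univ m), compl_eq_univ_sdiff]
      have hle := ncard_insert_le p (x '' {m}ᶜ)
      rcases exists_isExtension_range_ne_or_subset_union hι hL hne Z hxp (by rw [hrange]; omega)
        with ⟨y, hy, hyZ⟩ | hp
      · exact absurd (h _ y hy) hyZ
      · rwa [hrange] at hp
  obtain ⟨p, hp, q, hq, hpq⟩ := hm
  have hLZ : ∀ j, L j ⊆ Z ∪ x '' {m}ᶜ := fun j a ha => by
    rcases (hcover p hp).2 j ha, (hcover q hq).2 j ha with
      ⟨ha | rfl | ha, ha' | ha' | ha'⟩ <;> simp_all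
  have hle := ncard_union_le Z (x '' {m}ᶜ)
  have hZ := (hcover p hp).1
  have h6 := (hL (Classical.arbitrary ι)).trans (ncard_le_ncard (hLZ _))
  obtain ⟨j, hj⟩ := hne (by omega) (Z ∪ x '' {m}ᶜ) (by omega)
  exact hj (eq_of_subset_of_ncard_le (hLZ j) (by have := hL j; omega))

theorem exists_isExtension_range_ne [Nonempty ι] (hι : Nat.card ι ≤ 4) (hFL : ∀ j, F j ⊆ L j)
    (hF : ∀ j, (F j).Nontrivial) (hL : ∀ j, 6 ≤ (L j).ncard)
    (hne : Nat.card ι = 4 → ∀ U : Set C, U.ncard = 6 → ∃ j, L j ≠ U) (Z : Set C) :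
    ∃ x y, IsExtension F L x y ∧ range y ≠ Z := by
  classical
  by_cases hdisj : Pairwise (Disjoint on F)
  · exact exists_isExtension_range_ne_of_pairwise_disjoint hFL hF hdisj Z
  obtain ⟨i, k, hik, hmeet⟩ : ∃ i k, i ≠ k ∧ ¬ Disjoint (F i) (F k) := by
    simpa [Pairwise] using hdisj
  obtain ⟨r, hri, hrk⟩ := not_disjoint_iff.1 hmeet
  choose x hx using fun j => (hF j).nonempty
  by_cases hcard : Nat.card ι ≤ 3
  · refine exists_isExtension_range_ne_of_ncard_image_le hι hL hne Z hx (hF i) ?_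
    have := ncard_image_le (f := x) (toFinite {i}ᶜ)
    have := ncard_compl_add_ncard {i}
    rw [ncard_singleton] at this
    omega
  obtain ⟨m, hm⟩ : ∃ m, m ∉ ({i, k} : Set ι) := by
    by_contra! h
    have := ncard_pair hik
    rw [eq_univ_of_forall h, ncard_univ] at this
    omega
  rw [mem_insert_iff, mem_singleton_iff, not_or] at hm
  have hupdate : ∀ x : ι → C, (∀ j, x j ∈ F j) → ∀ m, r ∈ F m → ∀ j, update x m r j ∈ F j :=
    fun x hx m hr => (forall_update_iff x fun j a => a ∈ F j).2 ⟨hr, fun j _ => hx j⟩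
  have hx' := hupdate _ (hupdate x hx i hri) k hrk
  have hA := ncard_image_compl_singleton_add_two_le (x := update (update x i r) k r) hik hm.1 hm.2
    (by simp [hik])
  exact exists_isExtension_range_ne_of_ncard_image_le hι hL hne Z hx' (hF m) (by omega)

theorem ncard_add_one_le_ncard_sdiff_image_add_ncard {S : Set ι} {T : Set C} {j : ι} (hj : j ∈ S)
    (hT : x j ∉ T) : T.ncard + 1 ≤ (T \ x '' S).ncard + S.ncard := by
  have hsub : T \ x '' (S \ {j}) ⊆ T \ x '' S := by
    rintro a ⟨haT, ha⟩
    refine ⟨haT, ?_⟩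
    rintro ⟨k, hk, rfl⟩
    exact ha ⟨k, ⟨hk, fun h => hT (h ▸ haT)⟩, rfl⟩
  have hle := le_ncard_sdiff (x '' (S \ {j})) T
  have hmono := ncard_le_ncard hsub
  have himage := ncard_image_le (f := x) (toFinite (S \ {j}))
  have := ncard_sdiff_singleton_add_one hj
  omega

omit [Finite C] in
theorem exists_isExtension_of_forall_notMem_image {S : Set ι} (hFL : ∀ j, Disjoint (F j) (L j))
    (hS : ∀ j ∉ S, Nat.card ι ≤ (F j).ncard) (hx : ∀ j ∈ S, x j ∈ F j)
    (hy : Injective y) (hyL : ∀ j, y j ∈ L j \ x '' S) : ∃ x', IsExtension F L x' y := by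
  have hfree : ∀ j, ∃ a ∈ F j, a ∉ range y := fun j => by
    by_cases hj : j ∈ S
    · exact ⟨x j, hx j hj, fun ⟨k, hk⟩ => (hyL k).2 ⟨j, hj, hk.symm⟩⟩
    · by_contra! h
      have hlt := ncard_lt_ncard ((ssubset_iff_of_subset h).2
        ⟨y j, mem_range_self j, disjoint_right.1 (hFL j) (hyL j).1⟩)
      rw [ncard_range_of_injective hy] at hlt
      exact (hS j hj).not_gt hlt
  choose x' hx'F hx' using hfree
  exact ⟨x', hx'F, fun j => (hyL j).1, hy, fun i j hij => hx' i ⟨j, hij.symm⟩⟩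

theorem exists_isExtension_or_exists_sdiff_image_subset {S : Set ι}
    (hFL : ∀ j, Disjoint (F j) (L j)) (hι : Nat.card ι ≤ 4) (hL : ∀ j, 4 ≤ (L j).ncard)
    (hS : ∀ j ∉ S, Nat.card ι ≤ (F j).ncard) (hcard : Nat.card ι + S.ncard ≤ 6)
    (hx : ∀ j, x j ∈ F j) :
    (∃ x' y, IsExtension F L x' y) ∨
      ∃ U : Set C, U.ncard < Nat.card ι ∧ ∀ j, L j \ x '' S ⊆ U := by
  refine (exists_injective_or_exists_superset (fun j => L j \ x '' S) fun s hs hne => ?_).imp_left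
    fun ⟨y, hy, hyL⟩ => ?_
  · by_cases hmeet : (s ∩ S).Nonempty
    · obtain ⟨j, hjs, hjS⟩ := hmeet
      have := ncard_add_one_le_ncard_sdiff_image_add_ncard hjS (disjoint_left.1 (hFL j) (hx j))
      have := ncard_lt_card hs
      exact ⟨j, hjs, by have := hL j; omega⟩
    · obtain ⟨j, hj⟩ := hne
      have := ncard_le_ncard (show s ⊆ Sᶜ from fun k hk hkS => hmeet ⟨k, hk, hkS⟩)
      have := ncard_compl_add_ncard S
      have := le_ncard_sdiff (x '' S) (L j)
      have := ncard_image_le (f := x) (toFinite S)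
      exact ⟨j, hj, by have := hL j; omega⟩
  · obtain ⟨x', hx'⟩ := exists_isExtension_of_forall_notMem_image hFL hS (fun j _ => hx j) hy hyL
    exact ⟨x', y, hx'⟩

theorem exists_isExtension_or_sdiff_insert_subset {S : Set ι} {m : ι} (hm : m ∈ S)
    (hFL : ∀ j, Disjoint (F j) (L j)) (hι : Nat.card ι ≤ 4) (hL : ∀ j, 4 ≤ (L j).ncard)
    (hS : ∀ j ∉ S, Nat.card ι ≤ (F j).ncard) (hcard : Nat.card ι + S.ncard ≤ 6)
    (hx : ∀ j, x j ∈ F j) {p : C} (hp : p ∈ F m) :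
    (∃ x' y, IsExtension F L x' y) ∨ (L m \ x '' (S \ {m})).ncard < Nat.card ι ∧
      ∀ j, L j \ insert p (x '' (S \ {m})) ⊆ L m \ x '' (S \ {m}) := by
  classical
  have hxp : ∀ j, update x m p j ∈ F j :=
    (forall_update_iff x fun j a => a ∈ F j).2 ⟨hp, fun j _ => hx j⟩
  refine (exists_isExtension_or_exists_sdiff_image_subset hFL hι hL hS hcard hxp).imp_right
    fun ⟨U, hU, hLU⟩ => ?_
  rw [image_update_of_mem hm] at hLU
  set A := x '' (S \ {m})
  have hmU : L m \ A ⊆ U := fun a ha => hLU m ⟨ha.1, by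
    rintro (rfl | haA)
    · exact disjoint_left.1 (hFL m) hp ha.1
    · exact ha.2 haA⟩
  have hA : A.ncard ≤ (S \ {m}).ncard := ncard_image_le (toFinite _)
  have hSm := ncard_sdiff_singleton_add_one hm
  have hmA := le_ncard_sdiff A (L m)
  have hLm := hL m
  rw [eq_of_subset_of_ncard_le hmU (by omega)]
  exact ⟨hU, hLU⟩

theorem exists_isExtension_of_nontrivial {S : Set ι} (hSn : S.Nontrivial)
    (hFL : ∀ j, Disjoint (F j) (L j)) (hF : ∀ j, (F j).Nontrivial) (hι : Nat.card ι ≤ 4)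
    (hL : ∀ j, 4 ≤ (L j).ncard) (hS : ∀ j ∉ S, Nat.card ι ≤ (F j).ncard)
    (hcard : Nat.card ι + S.ncard ≤ 6) : ∃ x y, IsExtension F L x y := by
  obtain ⟨m, hm, j, hj, hmj⟩ := hSn
  obtain ⟨p, hp, q, hq, hpq⟩ := hF m
  choose x hx using fun j => (hF j).nonempty
  by_contra h
  have hcover := fun {a} (ha : a ∈ F m) =>
    (exists_isExtension_or_sdiff_insert_subset hm hFL hι hL hS hcard hx ha).resolve_left h
  set A := x '' (S \ {m})
  have hjA : L j \ A ⊆ L m \ A := fun a ha => by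
    rcases eq_or_ne a p with rfl | hap
    · exact (hcover hq).2 j ⟨ha.1, by simp [hpq, ha.2]⟩
    · exact (hcover hp).2 j ⟨ha.1, by simp [hap, ha.2]⟩
  have hle := (ncard_le_ncard hjA).trans_lt (hcover hp).1
  have hSm := ncard_sdiff_singleton_add_one hm
  have hjm : (L j).ncard + 1 ≤ (L j \ A).ncard + (S \ {m}).ncard :=
    ncard_add_one_le_ncard_sdiff_image_add_ncard ⟨hj, hmj.symm⟩ (disjoint_left.1 (hFL j) (hx j))
  have hLj := hL j
  omega

theorem exists_isExtension_of_disjoint {S : Set ι} (hFL : ∀ j, Disjoint (F j) (L j))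
    (hF : ∀ j, (F j).Nontrivial) (hι : Nat.card ι ≤ 4)
    (hL : ∀ j, 4 ≤ (L j).ncard) (hS : ∀ j ∉ S, Nat.card ι ≤ (F j).ncard)
    (hcard : Nat.card ι + S.ncard ≤ 6) : ∃ x y, IsExtension F L x y := by
  rcases subsingleton_or_nontrivial ι with hsub | hnt
  · choose x hx using fun j => (hF j).nonempty
    choose y hy using fun j => nonempty_of_ncard_ne_zero (s := L j) (by have := hL j; omega)
    exact ⟨x, y, hx, hy, injective_of_subsingleton y, fun i j =>
      (hFL j).ne_of_mem (Subsingleton.elim i j ▸ hx i) (hy j)⟩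
  · obtain ⟨T, hST, -, hT⟩ := exists_subsuperset_card_eq (subset_univ S)
      (le_max_right 2 S.ncard) (by
        rw [ncard_univ, max_le_iff]
        exact ⟨Finite.one_lt_card, by simpa [ncard_univ] using ncard_le_ncard (subset_univ S)⟩)
    exact exists_isExtension_of_nontrivial (one_lt_ncard_iff_nontrivial.1 (by omega)) hFL hF hι hL
      (fun j hj => hS j fun h => hj (hST h)) (by omega)

end Extensions

/-! ### Arc colorings -/

section ArcColorings

open Set Function

variable {V C : Type*} {H : SimpleGraph V} {c : V → V → C}

/-- The colors of the arcs leaving `v`, where `c v u` colors the arc from `v` to `u`, that is,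
the incidence `(v, vu)`. -/
def outColors (H : SimpleGraph V) (c : V → V → C) (v : V) : Set C :=
  c v '' H.neighborSet v

/-- The colors of the arcs entering `v`. -/
def inColors (H : SimpleGraph V) (c : V → V → C) (v : V) : Set C :=
  (c · v) '' H.neighborSet v

/-- Incidence colorings with an arbitrary color type, described vertex by vertex. -/
structure IsArcColoring (H : SimpleGraph V) (c : V → V → C) : Prop where
  injOn : ∀ v, InjOn (c v) (H.neighborSet v)
  disjoint : ∀ v, Disjoint (inColors H c v) (outColors H c v)

namespace IsArcColoring

theorem bot (c : V → V → C) : IsArcColoring ⊥ c :=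
  ⟨fun v => by simp [neighborSet], fun v => by simp [inColors, outColors, neighborSet]⟩

theorem ne (hc : IsArcColoring H c) {u v w : V} (huv : H.Adj u v) (hvw : H.Adj v w) :
    c u v ≠ c v w :=
  (hc.disjoint v).ne_of_mem ⟨u, huv.symm, rfl⟩ ⟨w, hvw, rfl⟩

theorem isIncidenceColoring {n : ℕ} {c : V → V → Fin n} (hc : IsArcColoring H c) :
    IsIncidenceColoring H c := by
  intro v u w x hvu hwx hne hadj
  have hvw : v = w ∨ u = w ∨ v = x := by
    simp only [Sym2.eq_iff] at hadj
    grind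
  rcases hvw with rfl | rfl | rfl
  · exact fun h => hne (by rw [hc.injOn v hvu hwx h])
  · exact hc.ne hvu hwx
  · exact (hc.ne hwx hvu).symm

theorem incChromaticNumber_le {n : ℕ} {c : V → V → Fin n} (hc : IsArcColoring H c) :
    incChromaticNumber H ≤ n :=
  Nat.sInf_le ⟨c, hc.isIncidenceColoring⟩

theorem outColors_ne_of_adj (hc : IsArcColoring H c) {u v : V} (huv : H.Adj u v) :
    outColors H c u ≠ outColors H c v := fun h =>
  disjoint_left.1 (hc.disjoint v) ⟨u, huv.symm, rfl⟩ (h ▸ ⟨v, huv, rfl⟩)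

theorem ncard_outColors (hc : IsArcColoring H c) (v : V) :
    (outColors H c v).ncard = (H.neighborSet v).ncard :=
  (hc.injOn v).ncard_image

end IsArcColoring

open scoped Classical in
/-- Recolors the arcs at `w`: the arc from a neighbor `j` receives `x j`, the arc to it `y j`. -/
noncomputable def recolorAt {w : V} (c : V → V → C) (x y : H.neighborSet w → C) : V → V → C :=
  fun a b =>
    if a = w then extend (↑) y (c w) b else if b = w then extend (↑) x (c · w) a else c a b

variable {w : V} {x y : H.neighborSet w → C}

theorem recolorAt_left (j : H.neighborSet w) : recolorAt c x y w j = y j := by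
  simp [recolorAt]

theorem recolorAt_right (j : H.neighborSet w) : recolorAt c x y j w = x j := by
  simp [recolorAt, j.2.ne']

theorem recolorAt_of_ne {a b : V} (ha : a ≠ w) (hb : b ≠ w) : recolorAt c x y a b = c a b := by
  simp [recolorAt, ha, hb]

theorem outColors_recolorAt_self : outColors H (recolorAt c x y) w = range y := by
  rw [outColors, image_eq_range]
  simp only [recolorAt_left]

theorem inColors_recolorAt_self : inColors H (recolorAt c x y) w = range x := by
  rw [inColors, image_eq_range]
  simp only [recolorAt_right]

theorem neighborSet_deleteIncidenceSet_of_ne {v : V} (hv : v ≠ w) :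
    (H.deleteIncidenceSet w).neighborSet v = H.neighborSet v \ {w} := by
  ext u
  simp [deleteIncidenceSet_adj, hv]

theorem deleteIncidenceSet_lt (hw : (H.neighborSet w).Nonempty) : H.deleteIncidenceSet w < H :=
  (H.deleteIncidenceSet_le w).lt_of_not_ge fun h => by
    obtain ⟨u, hu⟩ := hw
    simpa [deleteIncidenceSet_adj] using h hu

theorem insert_neighborSet_deleteIncidenceSet (j : H.neighborSet w) :
    insert w ((H.deleteIncidenceSet w).neighborSet j) = H.neighborSet j := by
  rw [neighborSet_deleteIncidenceSet_of_ne j.2.ne']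
  exact insert_sdiff_self_of_mem j.2.symm

theorem neighborSet_deleteIncidenceSet_of_not_adj {v : V} (hv : v ≠ w) (hvw : ¬ H.Adj w v) :
    (H.deleteIncidenceSet w).neighborSet v = H.neighborSet v := by
  rw [neighborSet_deleteIncidenceSet_of_ne hv, sdiff_singleton_eq_self fun h => hvw h.symm]

theorem eqOn_recolorAt_out {v : V} (hv : v ≠ w) :
    EqOn (recolorAt c x y v) (c v) ((H.deleteIncidenceSet w).neighborSet v) := fun u hu => by
  rw [neighborSet_deleteIncidenceSet_of_ne hv] at hu
  exact recolorAt_of_ne hv hu.2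

theorem eqOn_recolorAt_in {v : V} (hv : v ≠ w) :
    EqOn (recolorAt c x y · v) (c · v) ((H.deleteIncidenceSet w).neighborSet v) := fun u hu => by
  rw [neighborSet_deleteIncidenceSet_of_ne hv] at hu
  exact recolorAt_of_ne hu.2 hv

theorem outColors_recolorAt_neighbor (j : H.neighborSet w) :
    outColors H (recolorAt c x y) j = insert (x j) (outColors (H.deleteIncidenceSet w) c j) := by
  rw [outColors, outColors, ← insert_neighborSet_deleteIncidenceSet j, image_insert_eq,
    recolorAt_right, (eqOn_recolorAt_out j.2.ne').image_eq]

theorem inColors_recolorAt_neighbor (j : H.neighborSet w) :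
    inColors H (recolorAt c x y) j = insert (y j) (inColors (H.deleteIncidenceSet w) c j) := by
  rw [inColors, inColors, ← insert_neighborSet_deleteIncidenceSet j, image_insert_eq,
    recolorAt_left, (eqOn_recolorAt_in j.2.ne').image_eq]

theorem outColors_recolorAt_of_not_adj {v : V} (hv : v ≠ w) (hvw : ¬ H.Adj w v) :
    outColors H (recolorAt c x y) v = outColors (H.deleteIncidenceSet w) c v := by
  rw [outColors, outColors, ← (eqOn_recolorAt_out hv).image_eq,
    neighborSet_deleteIncidenceSet_of_not_adj hv hvw]

theorem inColors_recolorAt_of_not_adj {v : V} (hv : v ≠ w) (hvw : ¬ H.Adj w v) :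
    inColors H (recolorAt c x y) v = inColors (H.deleteIncidenceSet w) c v := by
  rw [inColors, inColors, ← (eqOn_recolorAt_in hv).image_eq,
    neighborSet_deleteIncidenceSet_of_not_adj hv hvw]

theorem IsArcColoring.injOn_recolorAt (hc : IsArcColoring (H.deleteIncidenceSet w) c)
    (hy : Injective y) (hx : ∀ j : H.neighborSet w, x j ∉ outColors (H.deleteIncidenceSet w) c j)
    (v : V) :
    InjOn (recolorAt c x y v) (H.neighborSet v) := by
  rcases eq_or_ne v w with rfl | hv
  · intro a ha b hb hab
    lift a to H.neighborSet v using ha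
    lift b to H.neighborSet v using hb
    rw [recolorAt_left, recolorAt_left] at hab
    rw [hy hab]
  have hinj := (hc.injOn v).congr (eqOn_recolorAt_out (x := x) (y := y) hv).symm
  by_cases hwv : H.Adj w v
  · lift v to H.neighborSet w using hwv
    rw [← insert_neighborSet_deleteIncidenceSet v, injOn_insert (by simp [deleteIncidenceSet_adj]),
      recolorAt_right, (eqOn_recolorAt_out hv).image_eq]
    exact ⟨hinj, hx v⟩
  · rwa [← neighborSet_deleteIncidenceSet_of_not_adj hv hwv]

theorem IsArcColoring.recolorAt (hc : IsArcColoring (H.deleteIncidenceSet w) c)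
    (hxy : IsExtension
      (fun j : H.neighborSet w => (outColors (H.deleteIncidenceSet w) c j ∪
        inColors (H.deleteIncidenceSet w) c j)ᶜ)
      (fun j => (outColors (H.deleteIncidenceSet w) c j)ᶜ) x y) :
    IsArcColoring H (recolorAt c x y) where
  injOn := hc.injOn_recolorAt hxy.injective fun j h =>
    hxy.left_mem j (.inl h)
  disjoint v := by
    rcases eq_or_ne v w with rfl | hv
    · rw [outColors_recolorAt_self, inColors_recolorAt_self, disjoint_range_iff]
      exact hxy.ne
    by_cases hwv : H.Adj w v
    · lift v to H.neighborSet w using hwv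
      rw [outColors_recolorAt_neighbor, inColors_recolorAt_neighbor, disjoint_insert_left,
        disjoint_insert_right, mem_insert_iff, not_or]
      exact ⟨⟨(hxy.ne v v).symm, hxy.right_mem v⟩, fun h => hxy.left_mem v (.inr h), hc.disjoint v⟩
    · rw [outColors_recolorAt_of_not_adj hv hwv, inColors_recolorAt_of_not_adj hv hwv]
      exact hc.disjoint v

variable [Finite V] {D : ℕ}

theorem ncard_neighborSet_deleteIncidenceSet_add_one (j : H.neighborSet w) :
    ((H.deleteIncidenceSet w).neighborSet j).ncard + 1 = (H.neighborSet j).ncard := by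
  rw [neighborSet_deleteIncidenceSet_of_ne j.2.ne']
  exact ncard_sdiff_singleton_add_one j.2.symm

theorem IsArcColoring.ncard_compl_outColors_deleteIncidenceSet {c : V → V → Fin (D + 5)}
    (hc : IsArcColoring (H.deleteIncidenceSet w) c) (j : H.neighborSet w) :
    (outColors (H.deleteIncidenceSet w) c j)ᶜ.ncard + (H.neighborSet j).ncard = D + 6 := by
  have hcompl := ncard_compl_add_ncard (outColors (H.deleteIncidenceSet w) c j)
  have hdeg := ncard_neighborSet_deleteIncidenceSet_add_one j
  rw [hc.ncard_outColors, Nat.card_fin] at hcompl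
  omega

theorem exists_isArcColoring_outColors_ne_of_deleteIncidenceSet {c : V → V → Fin (D + 5)}
    (hD : D ≤ 5) (hH : ∀ v, (H.neighborSet v).ncard ≤ D) (hw : (H.neighborSet w).Nonempty)
    (hw4 : (H.neighborSet w).ncard ≤ 4) (hc : IsArcColoring (H.deleteIncidenceSet w) c)
    (hne : (H.neighborSet w).ncard = 4 → ∀ U : Set (Fin (D + 5)), U.ncard = 6 →
      ∃ j ∈ H.neighborSet w, (outColors (H.deleteIncidenceSet w) c j)ᶜ ≠ U)
    {v : V} (hv : v ≠ w) :
    ∃ c : V → V → Fin (D + 5), IsArcColoring H c ∧ outColors H c w ≠ outColors H c v := by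
  have := hw.to_subtype
  set H' := H.deleteIncidenceSet w
  have hout : ∀ j : H.neighborSet w, 6 ≤ (outColors H' c j)ᶜ.ncard := fun j => by
    have hcompl : (outColors H' c j)ᶜ.ncard + (H.neighborSet j).ncard = D + 6 :=
      hc.ncard_compl_outColors_deleteIncidenceSet j
    have := hH j
    omega
  have hfree : ∀ j : H.neighborSet w, (outColors H' c j ∪ inColors H' c j)ᶜ.Nontrivial :=
    fun j => one_lt_ncard_iff_nontrivial.1 <| by
      have hin : (inColors H' c j).ncard ≤ (H'.neighborSet j).ncard := ncard_image_le (toFinite _)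
      have hunion := ncard_union_le (outColors H' c j) (inColors H' c j)
      have hcompl := ncard_compl_add_ncard (outColors H' c j ∪ inColors H' c j)
      have hdeg : (H'.neighborSet j).ncard + 1 = (H.neighborSet j).ncard :=
        ncard_neighborSet_deleteIncidenceSet_add_one j
      rw [hc.ncard_outColors] at hunion
      rw [Nat.card_fin] at hcompl
      have := hH j
      omega
  obtain ⟨x, y, hxy, hyv⟩ := exists_isExtension_range_ne hw4
    (fun j => compl_subset_compl.2 subset_union_left) hfree hout
    (fun h4 U hU => let ⟨j, hj, hjU⟩ := hne h4 U hU; ⟨⟨j, hj⟩, hjU⟩) (outColors H' c v)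
  refine ⟨recolorAt c x y, hc.recolorAt hxy, ?_⟩
  by_cases hwv : H.Adj w v
  · exact (hc.recolorAt hxy).outColors_ne_of_adj hwv
  · rwa [outColors_recolorAt_self, outColors_recolorAt_of_not_adj hv hwv]

theorem exists_isArcColoring_compl_outColors_ne (hw4 : (H.neighborSet w).ncard = 4)
    (hH : ∀ v, (H.neighborSet v).ncard ≤ D)
    (hex : ∃ c : V → V → Fin (D + 5), IsArcColoring (H.deleteIncidenceSet w) c)
    (hsep : ∀ a ∈ H.neighborSet w, ((H.deleteIncidenceSet w).neighborSet a).Nonempty → ∀ b ≠ a,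
      ∃ c : V → V → Fin (D + 5), IsArcColoring (H.deleteIncidenceSet w) c ∧
        outColors (H.deleteIncidenceSet w) c a ≠ outColors (H.deleteIncidenceSet w) c b) :
    ∃ c : V → V → Fin (D + 5), IsArcColoring (H.deleteIncidenceSet w) c ∧
      ∀ U : Set (Fin (D + 5)), U.ncard = 6 →
        ∃ j ∈ H.neighborSet w, (outColors (H.deleteIncidenceSet w) c j)ᶜ ≠ U := by
  obtain ⟨a, ha, b, hb, hab⟩ : (H.neighborSet w).Nontrivial :=
    one_lt_ncard_iff_nontrivial.1 (by omega)
  by_cases hNa : ((H.deleteIncidenceSet w).neighborSet a).Nonempty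
  · obtain ⟨c, hc, hcab⟩ := hsep a ha hNa b hab.symm
    refine ⟨c, hc, fun U _ => ?_⟩
    by_contra! h
    exact hcab (compl_injective ((h a ha).trans (h b hb).symm))
  · obtain ⟨c, hc⟩ := hex
    refine ⟨c, hc, fun U hU => ⟨a, ha, fun h => ?_⟩⟩
    rw [outColors, not_nonempty_iff_eq_empty.1 hNa, image_empty, compl_empty] at h
    have := hH w
    rw [← h, ncard_univ, Nat.card_fin] at hU
    omega

theorem exists_isArcColoring_outColors_ne (hD : D ≤ 5) {G : SimpleGraph V}
    (hG : ∀ v, (G.neighborSet v).ncard ≤ D)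
    (hdegen : ∀ H ≤ G, H ≠ ⊥ → ∃ w, (H.neighborSet w).Nonempty ∧ (H.neighborSet w).ncard ≤ 4)
    (hHG : H ≤ G) {v : V} (hw : (H.neighborSet w).Nonempty)
    (hw4 : (H.neighborSet w).ncard ≤ 4) (hv : v ≠ w) :
    ∃ c : V → V → Fin (D + 5), IsArcColoring H c ∧ outColors H c w ≠ outColors H c v := by
  induction H using WellFoundedLT.induction generalizing v w with | ind H ih => ?_
  have hH : ∀ v, (H.neighborSet v).ncard ≤ D := fun v =>
    (ncard_le_ncard fun _ hu => hHG hu).trans (hG v)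
  set H' := H.deleteIncidenceSet w
  have hlt : H' < H := deleteIncidenceSet_lt hw
  have hle : H' ≤ G := hlt.le.trans hHG
  have hex : ∃ c : V → V → Fin (D + 5), IsArcColoring H' c := by
    rcases eq_or_ne H' ⊥ with hbot | hbot
    · exact ⟨fun _ _ => 0, hbot ▸ .bot _⟩
    · obtain ⟨u, ⟨t, hut⟩, hu4⟩ := hdegen H' hle hbot
      obtain ⟨c, hc, -⟩ := ih H' hlt hle ⟨t, hut⟩ hu4 (H'.ne_of_adj hut).symm
      exact ⟨c, hc⟩
  by_cases h4 : (H.neighborSet w).ncard = 4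
  · obtain ⟨c, hc, hcne⟩ := exists_isArcColoring_compl_outColors_ne h4 hH hex
      fun a ha hNa b hab => ih H' hlt hle hNa (by
        have hdeg : (H'.neighborSet a).ncard + 1 = (H.neighborSet a).ncard :=
          ncard_neighborSet_deleteIncidenceSet_add_one ⟨a, ha⟩
        have := hH a
        omega) hab
    exact exists_isArcColoring_outColors_ne_of_deleteIncidenceSet hD hH hw hw4 hc
      (fun _ => hcne) hv
  · obtain ⟨c, hc⟩ := hex
    exact exists_isArcColoring_outColors_ne_of_deleteIncidenceSet hD hH hw hw4 hc
      (fun h => absurd h h4) hv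

/-- The reducible configuration for palettes of `D + 5` colors: few neighbors, and the fewer of
them of degree at least `D - 1` the more neighbors there are. -/
structure IsLight (H : SimpleGraph V) (D : ℕ) (w : V) : Prop where
  nonempty : (H.neighborSet w).Nonempty
  ncard_le : (H.neighborSet w).ncard ≤ 4
  ncard_add_ncard_le : (H.neighborSet w).ncard +
    (H.neighborSet w ∩ {u | D ≤ (H.neighborSet u).ncard + 1}).ncard ≤ 6

theorem IsLight.exists_isExtension [Finite C] (hw : IsLight H D w)
    (hH : ∀ v, (H.neighborSet v).ncard ≤ D) {L I : H.neighborSet w → Set C}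
    (hL : ∀ j, (L j).ncard + (H.neighborSet j).ncard = D + 6) (hIL : ∀ j, I j ⊆ L j)
    (hI : ∀ j, (I j).ncard = 4) : ∃ x y, IsExtension (fun j => L j \ I j) I x y := by
  have hF : ∀ j, (L j \ I j).ncard + (H.neighborSet j).ncard = D + 2 := fun j => by
    have := ncard_sdiff_add_ncard_of_subset (hIL j)
    have := hL j
    have := hI j
    omega
  have hheavy : (Subtype.val ⁻¹' {u | D ≤ (H.neighborSet u).ncard + 1} :
      Set (H.neighborSet w)).ncard =
        (H.neighborSet w ∩ {u | D ≤ (H.neighborSet u).ncard + 1}).ncard := by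
    rw [← ncard_image_of_injective _ Subtype.val_injective, Subtype.image_preimage_coe]
  refine exists_isExtension_of_disjoint (fun j => disjoint_sdiff_left)
    (fun j => one_lt_ncard_iff_nontrivial.1 ?_) hw.ncard_le (fun j => (hI j).ge)
    (fun j hj => hw.ncard_le.trans ?_) (hheavy ▸ hw.ncard_add_ncard_le)
  · have := hF j
    have := hH j
    omega
  · have := hF j
    rw [mem_preimage, mem_ofPred_eq] at hj
    omega

theorem IsLight.exists_isArcColoring {c : V → V → Fin (D + 5)} (hw : IsLight H D w)
    (hH : ∀ v, (H.neighborSet v).ncard ≤ D) (hc : IsArcColoring (H.deleteIncidenceSet w) c)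
    (hin : ∀ v, (inColors (H.deleteIncidenceSet w) c v).ncard ≤ 4) :
    ∃ c : V → V → Fin (D + 5), IsArcColoring H c ∧ ∀ v, (inColors H c v).ncard ≤ 4 := by
  set H' := H.deleteIncidenceSet w
  have hout : ∀ j : H.neighborSet w,
      (outColors H' c j)ᶜ.ncard + (H.neighborSet j).ncard = D + 6 :=
    hc.ncard_compl_outColors_deleteIncidenceSet
  have hreserve : ∀ j : H.neighborSet w, ∃ I : Set (Fin (D + 5)), inColors H' c j ⊆ I ∧
      I ⊆ (outColors H' c j)ᶜ ∧ I.ncard = 4 := fun j =>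
    exists_subsuperset_card_eq (hc.disjoint j).subset_compl_right (hin j) (by
      have := hout j
      have := hH j
      omega)
  choose I hinI hIout hI using hreserve
  obtain ⟨x, y, hxy⟩ := hw.exists_isExtension hH hout hIout hI
  refine ⟨recolorAt c x y, hc.recolorAt (hxy.mono (fun j a ha => ?_) hIout), fun v => ?_⟩
  · rintro (h | h)
    exacts [ha.1 h, ha.2 (hinI j h)]
  rcases eq_or_ne v w with rfl | hv
  · rw [inColors_recolorAt_self, ← image_univ]
    exact (ncard_image_le (toFinite _)).trans ((ncard_univ _).trans_le hw.ncard_le)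
  by_cases hwv : H.Adj w v
  · lift v to H.neighborSet w using hwv
    rw [inColors_recolorAt_neighbor, ← hI v]
    exact ncard_le_ncard (insert_subset (hxy.right_mem v) (hinI v))
  · rw [inColors_recolorAt_of_not_adj hv hwv]
    exact hin v

theorem exists_isArcColoring_of_forall_exists_isLight {G : SimpleGraph V}
    (hG : ∀ v, (G.neighborSet v).ncard ≤ D) (hlight : ∀ H ≤ G, H ≠ ⊥ → ∃ w, IsLight H D w)
    (hHG : H ≤ G) :
    ∃ c : V → V → Fin (D + 5), IsArcColoring H c ∧ ∀ v, (inColors H c v).ncard ≤ 4 := by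
  induction H using WellFoundedLT.induction with | ind H ih => ?_
  rcases eq_or_ne H ⊥ with rfl | hH
  · exact ⟨fun _ _ => 0, .bot _, fun v => by simp [inColors, neighborSet]⟩
  obtain ⟨w, hw⟩ := hlight H hHG hH
  have hlt := deleteIncidenceSet_lt hw.nonempty
  obtain ⟨c, hc, hin⟩ := ih _ hlt (hlt.le.trans hHG)
  exact hw.exists_isArcColoring (fun v => (ncard_le_ncard fun _ hu => hHG hu).trans (hG v)) hc hin

end ArcColorings

/-! ### Density -/

section Density

variable {V : Type*} {G H : SimpleGraph V}

theorem MadLT.two_mul_ncard_edgeSet_lt {q : ℝ} (h : MadLT G q) (hHG : H ≤ G) (hH : H ≠ ⊥) :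
    (2 * H.edgeSet.ncard : ℝ) < q * H.support.ncard := by
  let K : G.Subgraph :=
    { verts := H.support
      Adj := H.Adj
      adj_sub := fun huv => hHG huv
      edge_vert := fun huv => ⟨_, huv⟩
      symm := H.symm }
  have hK : K.edgeSet = H.edgeSet := by
    ext e
    induction e using Sym2.ind
    rfl
  exact hK ▸ h K (Set.nonempty_iff_ne_empty.2 (H.support_eq_bot_iff.not.2 hH))

variable [Fintype V] [DecidableRel H.Adj]

theorem ncard_neighborSet (H : SimpleGraph V) [DecidableRel H.Adj] (v : V) :
    (H.neighborSet v).ncard = H.degree v := by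
  rw [Set.ncard_eq_toFinset_card', Set.toFinset_card, card_neighborSet_eq_degree]

theorem MadLT.sum_degree_support_lt {q : ℕ} (h : MadLT G q) (hHG : H ≤ G) (hH : H ≠ ⊥) :
    ∑ v ∈ H.support, H.degree v < ∑ _v ∈ H.support, q := by
  classical
  have hlt := h.two_mul_ncard_edgeSet_lt hHG hH
  rw [← coe_edgeFinset, Set.ncard_coe_finset, Set.ncard_eq_toFinset_card'] at hlt
  rw [sum_degrees_support_eq_twice_card_edges, Finset.sum_const, smul_eq_mul, mul_comm _ q]
  exact_mod_cast hlt

theorem card_mul_le_sum_degree (A B : Finset V) {k : ℕ}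
    (hA : ∀ a ∈ A, k ≤ (H.neighborSet a ∩ B).ncard) : A.card * k ≤ ∑ b ∈ B, H.degree b :=
  calc
    A.card * k ≤ ∑ a ∈ A, (B.bipartiteAbove H.Adj a).card :=
      Finset.card_nsmul_le_sum _ _ _ fun a ha => (hA a ha).trans_eq (by
        rw [← Set.ncard_coe_finset, Finset.coe_bipartiteAbove]
        congr 1
        ext b
        simp [and_comm])
    _ = ∑ b ∈ B, (A.bipartiteBelow H.Adj b).card :=
      Finset.sum_card_bipartiteAbove_eq_sum_card_bipartiteBelow _
    _ ≤ ∑ b ∈ B, H.degree b := Finset.sum_le_sum fun b _ => Finset.card_le_card fun a ha => by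
      exact (mem_neighborFinset _ _ _).2 ((Finset.mem_bipartiteBelow _).1 ha).2.symm

theorem sum_five_le_sum_degree_support
    (hmin : ∀ v ∈ H.support, 4 ≤ H.degree v)
    (hheavy : ∀ v ∈ H.support, H.degree v = 4 →
      3 ≤ (H.neighborSet v ∩ {u | 8 ≤ H.degree u}).ncard) :
    ∑ _v ∈ H.support, 5 ≤ ∑ v ∈ H.support, H.degree v := by
  classical
  set S := H.support.toFinset
  have hcount : (S.filter (H.degree · = 4)).card * 3 ≤
      ∑ v ∈ S.filter (8 ≤ H.degree ·), H.degree v :=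
    card_mul_le_sum_degree _ _ fun a ha => by
      rw [Finset.mem_filter, Set.mem_toFinset] at ha
      refine (hheavy a ha.1 ha.2).trans (Set.ncard_le_ncard fun u hu => ⟨hu.1, ?_⟩)
      simpa [S] using ⟨⟨a, hu.1.symm⟩, hu.2⟩
  -- Each vertex of degree at least eight gives `1 / 3` to all its neighbors; scaled by three.
  have hpoint : ∀ v ∈ S, 15 + (if 8 ≤ H.degree v then H.degree v else 0) ≤
      3 * H.degree v + if H.degree v = 4 then 3 else 0 := fun v hv => by
    have := hmin v (Set.mem_toFinset.1 hv)
    split_ifs <;> omega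
  have hsum := Finset.sum_le_sum hpoint
  simp only [Finset.sum_add_distrib, ← Finset.sum_filter, ← Finset.mul_sum, Finset.sum_const,
    smul_eq_mul] at hsum ⊢
  omega

end Density

section LightVertices

variable {V : Type*} [Finite V] {G H : SimpleGraph V}

theorem MadLT.exists_ncard_neighborSet_lt {q : ℕ} (h : MadLT G q) (hHG : H ≤ G) (hH : H ≠ ⊥) :
    ∃ w, (H.neighborSet w).Nonempty ∧ (H.neighborSet w).ncard < q := by
  classical
  have := Fintype.ofFinite V
  obtain ⟨w, hw, hlt⟩ := Finset.exists_lt_of_sum_lt (h.sum_degree_support_lt hHG hH)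
  exact ⟨w, H.mem_support.1 (Set.mem_toFinset.1 hw), (ncard_neighborSet H w).trans_lt hlt⟩

theorem MadLT.exists_isLight {D : ℕ} (hD : 9 ≤ D) (h : MadLT G 5) (hHG : H ≤ G) (hH : H ≠ ⊥) :
    ∃ w, IsLight H D w := by
  classical
  have := Fintype.ofFinite V
  by_contra! hlight
  refine (MadLT.sum_degree_support_lt (q := 5) (by exact_mod_cast h) hHG hH).not_ge
    (sum_five_le_sum_degree_support (fun v hv => ?_) fun v hv hv4 => ?_)
  · by_contra! hlt
    have hle : (H.neighborSet v ∩ {u | D ≤ (H.neighborSet u).ncard + 1}).ncard ≤ H.degree v :=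
      (Set.ncard_le_ncard Set.inter_subset_left).trans_eq (ncard_neighborSet H v)
    rw [← ncard_neighborSet] at hlt hle
    exact hlight v ⟨hv, by omega, by omega⟩
  · by_contra! hlt
    have hle : (H.neighborSet v ∩ {u | D ≤ (H.neighborSet u).ncard + 1}).ncard ≤
        (H.neighborSet v ∩ {u | 8 ≤ H.degree u}).ncard :=
      Set.ncard_le_ncard fun u hu => ⟨hu.1, by
        have := hu.2
        rw [Set.mem_ofPred_eq, ncard_neighborSet] at this
        rw [Set.mem_ofPred_eq]
        omega⟩
    rw [← ncard_neighborSet] at hv4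
    exact hlight v ⟨hv, hv4.le, by omega⟩

end LightVertices

theorem incidence_chromatic_mad_lt_five_general {V : Type*} [Finite V] {G : SimpleGraph V} {D : ℕ}
    (hmad : MadLT G 5) (hG : ∀ v, (G.neighborSet v).ncard ≤ D) (hD : 9 ≤ D ∨ D ≤ 5) :
    incChromaticNumber G ≤ D + 5 := by
  rcases hD with hD | hD
  · obtain ⟨c, hc, -⟩ := exists_isArcColoring_of_forall_exists_isLight hG
      (fun _ hHG hH => hmad.exists_isLight hD hHG hH) le_rfl
    exact hc.incChromaticNumber_le
  · have hdegen : ∀ H ≤ G, H ≠ ⊥ →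
        ∃ w, (H.neighborSet w).Nonempty ∧ (H.neighborSet w).ncard ≤ 4 := fun H hHG hH => by
      obtain ⟨w, hw, hlt⟩ := MadLT.exists_ncard_neighborSet_lt (q := 5) (by exact_mod_cast hmad)
        hHG hH
      exact ⟨w, hw, Nat.le_of_lt_succ hlt⟩
    rcases eq_or_ne G ⊥ with rfl | hbot
    · exact (IsArcColoring.bot fun _ _ => (0 : Fin (D + 5))).incChromaticNumber_le
    · obtain ⟨w, ⟨u, hu⟩, hw⟩ := hdegen G le_rfl hbot
      obtain ⟨c, hc, -⟩ := exists_isArcColoring_outColors_ne hD hG hdegen le_rfl ⟨u, hu⟩ hw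
        (G.ne_of_adj hu).symm
      exact hc.incChromaticNumber_le

theorem incidence_chromatic_mad_lt_five {V : Type*} [Fintype V] (G : SimpleGraph V)
    [DecidableRel G.Adj] (hmad : MadLT G 5) (hΔ : 9 ≤ G.maxDegree ∨ G.maxDegree ≤ 5) :
    incChromaticNumber G ≤ G.maxDegree + 5 :=
  incidence_chromatic_mad_lt_five_general hmad
    (fun v => (ncard_neighborSet G v).trans_le (G.degree_le_maxDegree v)) hΔ
end

section
/- Let G be a finite simple graph with maximum average degree mad(G) < 6 whose maximum degree satisfies Δ(G) ≥ 12 or Δ(G) ≤ 6. Then χ_i(G) ≤ Δ(G) + 6. -/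
open SimpleGraph

/-!
If `Δ(G) ≤ 6`, the bound of Brualdi and Massey gives `2Δ(G) ≤ Δ(G) + 6` colors: label the incidences
with `Δ(G)` labels, injectively at each vertex, so that as many edges as possible carry equal labels
at their two ends, and then split each label into two colors.

If `Δ(G) ≥ 12`, color by induction on the edges, reserving at each vertex a palette of six colors
for the incidences pointing to it. Give each vertex its degree as charge, and let a vertex of degree
`d > 6` hand `1 - 6 / d` to each neighbor. As the average charge is less than `6`, some vertex `v`
ends up with less than `6`, so it has few neighbors of large degree. Remove the edges at `v` and
color the rest. A neighbor `u` of `v` has the more free colors for `(u, uv)` the smaller its degree,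
which is enough to color the star of `v` by Hall's theorem.
-/

/-- A labelling of the incidences of `G`, the label of `(v, vu)` being `l v u`, in which distinct
incidences at the same vertex have distinct labels. -/
def IsOutInjective {V C : Type*} (G : SimpleGraph V) (l : V → V → C) : Prop :=
  ∀ v, Set.InjOn (l v) (G.neighborSet v)

theorem isIncidenceColoring_of_isOutInjective {V : Type*} {G : SimpleGraph V} {n : ℕ}
    {φ : V → V → Fin n} (hφ : IsOutInjective G φ)
    (hpath : ∀ ⦃v u x⦄, G.Adj v u → G.Adj u x → φ v u ≠ φ u x) : IsIncidenceColoring G φ := by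
  intro v u w x hvu hwx hne hadj heq
  have hvw : v ≠ w := by
    rintro rfl
    exact hne (by rw [hφ v hvu hwx heq])
  rcases hadj with h | h | h | h
  · exact hvw h
  · rcases Sym2.eq_iff.1 h with ⟨h, -⟩ | ⟨-, rfl⟩
    · exact hvw h
    · exact hpath hvu hwx heq
  · rcases Sym2.eq_iff.1 h with ⟨-, rfl⟩ | ⟨h, -⟩
    · exact hpath hvu hwx heq
    · exact hvu.ne h
  · rcases Sym2.eq_iff.1 h with ⟨h, -⟩ | ⟨rfl, -⟩
    · exact hvw h
    · exact hpath hwx hvu heq.symm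

section Labelling

variable {V C : Type*} {G : SimpleGraph V}

theorem exists_isOutInjective [Fintype C] [Nonempty C] [G.LocallyFinite]
    (hdeg : ∀ v, G.degree v ≤ Fintype.card C) : ∃ l : V → V → C, IsOutInjective G l := by
  have hv : ∀ v, ∃ f : V → C, Set.InjOn f (G.neighborSet v) := fun v => by
    obtain ⟨f, -, hf⟩ := (G.neighborSet v).toFinite.exists_injOn_of_encard_le
      (t := (Set.univ : Set C)) <| by
        rw [Set.encard_univ, ENat.card_eq_coe_fintype_card, ← G.coe_neighborFinset,
          Set.encard_coe_eq_coe_finsetCard]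
        exact_mod_cast hdeg v
    exact ⟨f, hf⟩
  choose l hl using hv
  exact ⟨l, hl⟩

/-- The ordered pairs of adjacent vertices whose edge has equally labelled incidences. -/
def agreementSet (G : SimpleGraph V) (l : V → V → C) : Set (V × V) :=
  {p | G.Adj p.1 p.2 ∧ l p.1 p.2 = l p.2 p.1}

/-- The labelling `l` with the labels of the incidences `(u, uv)` and `(u, ux)` exchanged. -/
def swapLabels [DecidableEq V] (l : V → V → C) (u v x : V) : V → V → C :=
  Function.update l u (l u ∘ Equiv.swap v x)

theorem isOutInjective_swapLabels [DecidableEq V] {l : V → V → C}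
    (hl : IsOutInjective G l) {u v x : V} (hv : G.Adj u v) (hx : G.Adj u x) :
    IsOutInjective G (swapLabels l u v x) := by
  intro w
  rcases eq_or_ne w u with rfl | hw
  · have hmaps : Set.MapsTo (Equiv.swap v x) (G.neighborSet w) (G.neighborSet w) := by
      intro b hb
      rw [Equiv.swap_apply_def]
      split_ifs
      exacts [hx, hv, hb]
    simpa only [swapLabels, Function.update_self] using
      (hl w).comp (Equiv.swap v x).injective.injOn hmaps
  · simpa only [swapLabels, Function.update_of_ne hw] using hl w

theorem agreementSet_ssubset_swapLabels [DecidableEq V] {l : V → V → C}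
    (hl : IsOutInjective G l) {u v x : V} (hv : G.Adj u v) (hx : G.Adj u x)
    (heq : l v u = l u x) (hne : l x u ≠ l u x) :
    agreementSet G l ⊂ agreementSet G (swapLabels l u v x) := by
  have hxv : x ≠ v := by
    rintro rfl
    exact hne heq
  have hkeep : ∀ b, G.Adj u b → l u b = l b u → Equiv.swap v x b = b := by
    intro b hb h
    refine Equiv.swap_apply_of_ne_of_ne ?_ ?_
    · rintro rfl
      exact hxv (hl u hx hb (heq.symm.trans h.symm))
    · rintro rfl
      exact hne h.symm
  refine (Set.ssubset_iff_of_subset ?_).2 ⟨(v, u), ⟨hv.symm, ?_⟩, ?_⟩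
  · rintro ⟨a, b⟩ ⟨hab, h⟩
    refine ⟨hab, ?_⟩
    dsimp only at hab h ⊢
    rcases eq_or_ne a u with rfl | ha
    · simpa [swapLabels, hab.ne', hkeep b hab h] using h
    · rcases eq_or_ne b u with rfl | hb
      · simpa [swapLabels, ha, hkeep a hab.symm h.symm] using h
      · simpa [swapLabels, ha, hb] using h
  · simpa [swapLabels, hv.ne'] using heq
  · rintro ⟨-, h⟩
    exact hxv (hl u hx hv (heq.symm.trans h))

-- A labelling with as many agreements as possible works, since a swap would add one.
theorem exists_isOutInjective_agreeing [Finite V] [Finite C]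
    (h : ∃ l : V → V → C, IsOutInjective G l) :
    ∃ l : V → V → C, IsOutInjective G l ∧
      ∀ ⦃v u x⦄, G.Adj v u → G.Adj u x → l v u = l u x → l x u = l u x := by
  classical
  obtain ⟨l, hl, hmax⟩ := Set.exists_max_image {l : V → V → C | IsOutInjective G l}
    (fun l => (agreementSet G l).ncard) (Set.toFinite _) h
  refine ⟨l, hl, fun v u x hvu hux heq => ?_⟩
  by_contra hne
  exact (hmax _ (isOutInjective_swapLabels hl hvu.symm hux)).not_gt
    (Set.ncard_lt_ncard (agreementSet_ssubset_swapLabels hl hvu.symm hux heq hne))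

/-- The bit that splits the label class of `(v, vu)` in two: whether the equally labelled incidence
`(u, ux)` that may follow it points down in a fixed linear order. If the two incidences of `ux`
agree, then `(u, ux)` is followed by `(x, xu)`, which points the other way. -/
def descentBit [LinearOrder V] (G : SimpleGraph V) (l : V → V → C) (v u : V) : Prop :=
  ∃ x, G.Adj u x ∧ l u x = l v u ∧ x < u

theorem not_descentBit_iff [LinearOrder V] {l : V → V → C} (hl : IsOutInjective G l)
    {v u x : V} (hux : G.Adj u x) (heq : l v u = l u x) (hagree : l x u = l u x) :
    ¬ (descentBit G l v u ↔ descentBit G l u x) := by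
  have hvu : descentBit G l v u ↔ x < u :=
    ⟨fun ⟨_, hy, hly, hlt⟩ => hl u hy hux (hly.trans heq) ▸ hlt, fun h => ⟨x, hux, heq.symm, h⟩⟩
  have hux' : descentBit G l u x ↔ u < x :=
    ⟨fun ⟨_, hy, hly, hlt⟩ => hl x hy hux.symm (hly.trans hagree.symm) ▸ hlt,
      fun h => ⟨u, hux.symm, hagree, h⟩⟩
  rw [hvu, hux']
  rcases lt_or_gt_of_ne hux.ne with h | h <;> simp [h, h.not_gt]

theorem exists_isIncidenceColoring_of_two_mul_le [Fintype V] [DecidableRel G.Adj] {d n : ℕ}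
    (hdeg : ∀ v, G.degree v ≤ d) (hd : 0 < d) (hn : 2 * d ≤ n) :
    ∃ φ : V → V → Fin n, IsIncidenceColoring G φ := by
  classical
  have : NeZero d := ⟨hd.ne'⟩
  let : LinearOrder V := LinearOrder.lift' (Fintype.equivFin V) (Fintype.equivFin V).injective
  obtain ⟨l, hl, hagree⟩ := exists_isOutInjective_agreeing
    (exists_isOutInjective (G := G) (C := Fin d) (by simpa using hdeg))
  obtain ⟨ι⟩ : Nonempty (Fin d × Bool ↪ Fin n) :=
    Function.Embedding.nonempty_of_card_le (by simp; omega)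
  refine ⟨fun v u => ι (l v u, decide (descentBit G l v u)),
    isIncidenceColoring_of_isOutInjective ?_ ?_⟩
  · exact fun v u hu x hx h => hl v hu hx (Prod.ext_iff.1 (ι.injective h)).1
  · intro v u x hvu hux h
    obtain ⟨hlabel, hbit⟩ := Prod.ext_iff.1 (ι.injective h)
    exact not_descentBit_iff hl hux hlabel (hagree hvu hux hlabel) (decide_eq_decide.1 hbit)

end Labelling

section StarColoring

open Finset

variable {ι C : Type*} {N : Finset ι} {S L : ι → Finset C} {s : ℕ}

theorem card_le_card_sdiff_image_add [DecidableEq C] (A : Finset C) (B : Finset ι) (c : ι → C) :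
    #A ≤ #(A \ B.image c) + #B := by
  have := le_card_sdiff (B.image c) A
  have := card_image_le (s := B) (f := c)
  omega

theorem card_lt_card_sdiff_image_add [DecidableEq C] {A : Finset C} {B : Finset ι} {c : ι → C}
    {u : ι} (hu : u ∈ B) (hA : c u ∉ A) : #A < #(A \ B.image c) + #B := by
  classical
  have herase : A \ B.image c = A \ (B.erase u).image c := by
    conv_lhs => rw [← insert_erase hu, image_insert, sdiff_insert_of_notMem hA]
  have := card_le_card_sdiff_image_add A (B.erase u) c
  have := card_erase_add_one hu
  rw [herase]
  omega

theorem image_update_eq_insert [DecidableEq ι] [DecidableEq C] {t : ι} (ht : t ∈ N) (c : ι → C)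
    (x : C) : N.image (Function.update c t x) = insert x ((N.erase t).image c) := by
  conv_lhs => rw [← insert_erase ht, image_insert, Function.update_self]
  exact congrArg (insert x) <| image_congr fun u hu =>
    Function.update_of_ne (ne_of_mem_erase hu) _ _

-- Of two colors in `A`, either one leaves the other in some `S p`, which enlarges the union, or
-- removing the other from `S p` costs nothing.
theorem exists_card_le_card_biUnion_sdiff_insert [DecidableEq ι] [DecidableEq C]
    (hS : ∀ u ∈ N, s ≤ #(S u)) (hN : 2 * #N ≤ s + 2) {t p : ι} (ht : t ∈ N) (hp : p ∈ N)
    (hpt : p ≠ t) {c : ι → C} (hc : c p ∉ S p) {A : Finset C} (hA : Disjoint (S t) A)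
    (hcard : 1 < #A) :
    ∃ x ∈ A, #N ≤ #(N.biUnion fun u => S u \ insert x ((N.erase t).image c)) := by
  obtain ⟨a, ha, b, hb, hab⟩ := one_lt_card.1 hcard
  set R := (N.erase t).image c
  have herase := card_erase_add_one ht
  by_cases hbp : b ∈ S p \ insert a R
  · refine ⟨a, ha, ?_⟩
    have hle : #N ≤ #(S t \ insert a R) + 1 := by
      have : #(S t) ≤ #(S t \ R) + #(N.erase t) := card_le_card_sdiff_image_add _ _ c
      have := hS t ht
      rw [sdiff_insert_of_notMem (disjoint_right.1 hA ha)]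
      omega
    have hssub : S t \ insert a R ⊂ N.biUnion fun u => S u \ insert a R :=
      (ssubset_iff_of_subset (subset_biUnion_of_mem (S · \ insert a R) ht)).2
        ⟨b, mem_biUnion.2 ⟨p, hp, hbp⟩, fun h => disjoint_right.1 hA hb (mem_sdiff.1 h).1⟩
    exact hle.trans (card_lt_card hssub)
  · refine ⟨b, hb, ?_⟩
    have hfree : S p \ insert b R = S p \ R := by
      by_cases hbS : b ∈ S p
      · have hbR : b ∈ R := by simpa [hbS, hab.symm] using hbp
        rw [insert_eq_of_mem hbR]
      · exact sdiff_insert_of_notMem hbS R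
    have hle : #N ≤ #(S p \ insert b R) := by
      have : #(S p) < #(S p \ R) + #(N.erase t) :=
        card_lt_card_sdiff_image_add (mem_erase.2 ⟨hpt, hp⟩) hc
      have := hS p hp
      rw [hfree]
      omega
    exact hle.trans (card_le_card (subset_biUnion_of_mem (S · \ insert b R) hp))

/-- Colors for the incidences around a new vertex `v` with neighbors `N`: the color `c u` of
`(u, uv)` is taken from the list `L u`, and the color `f u` of `(v, vu)` from the palette `S u`. -/
structure IsStarColoring (N : Finset ι) (S L : ι → Finset C) (c f : ι → C) : Prop where
  in_mem : ∀ u ∈ N, c u ∈ L u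
  out_mem : ∀ u ∈ N, f u ∈ S u
  out_injOn : Set.InjOn f N
  out_ne_in : ∀ u ∈ N, ∀ w ∈ N, f u ≠ c w

variable [Nonempty C]

-- In Hall's condition a nonempty proper subset of the indices needs only one of its lists.
theorem exists_injOn_of_card_le_succ [DecidableEq C] {T : ι → Finset C}
    (hT : ∀ u ∈ N, #N ≤ #(T u) + 1) (hU : #N ≤ #(N.biUnion T)) :
    ∃ f : ι → C, (∀ u ∈ N, f u ∈ T u) ∧ Set.InjOn f N := by
  classical
  have hall : ∀ s : Finset N, #s ≤ #(s.biUnion fun u => T u) := by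
    intro s
    rcases eq_or_ne s univ with rfl | hs
    · have : (univ : Finset N).biUnion (fun u => T u) = N.biUnion T := by
        ext x
        simp
      rwa [this, card_univ, Fintype.card_coe]
    · rcases s.eq_empty_or_nonempty with rfl | ⟨u, hu⟩
      · simp
      · have hlt : #s < #N := by
          simpa only [Fintype.card_coe] using (card_lt_iff_ne_univ s).2 hs
        have hle : #(T u) ≤ #(s.biUnion fun u => T u) :=
          card_le_card (subset_biUnion_of_mem (fun u : N => T u) hu)
        have := hT u u.2
        omega
  obtain ⟨g, hg, hgT⟩ := (all_card_le_biUnion_card_iff_exists_injective fun u : N => T u).1 hall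
  obtain ⟨f, hf⟩ : ∃ f : ι → C, ∀ u : N, f u = g u :=
    ⟨Function.extend Subtype.val g fun _ => Classical.arbitrary C,
      Subtype.val_injective.extend_apply g _⟩
  refine ⟨f, fun u hu => hf ⟨u, hu⟩ ▸ hgT ⟨u, hu⟩, fun u hu w hw h => ?_⟩
  rw [hf ⟨u, hu⟩, hf ⟨w, hw⟩] at h
  exact congrArg Subtype.val (hg h)

theorem exists_injOn_sdiff_image [DecidableEq C] (hS : ∀ u ∈ N, s ≤ #(S u)) {B : Finset ι}
    {c : ι → C} (hBN : B ⊆ N) (hc : ∀ u ∈ B, c u ∉ S u) (hN : #N ≤ s) (hB : #B + #N ≤ s + 1) :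
    ∃ f : ι → C, (∀ u ∈ N, f u ∈ S u \ B.image c) ∧ Set.InjOn f N := by
  have hT : ∀ u ∈ N, s ≤ #(S u \ B.image c) + #B := fun u hu =>
    (hS u hu).trans (card_le_card_sdiff_image_add (S u) B c)
  refine exists_injOn_of_card_le_succ (fun u hu => by have := hT u hu; omega) ?_
  rcases N.eq_empty_or_nonempty with rfl | ⟨z, hz⟩
  · simp
  obtain ⟨u, hu, hle⟩ : ∃ u ∈ N, #N ≤ #(S u \ B.image c) := by
    rcases B.eq_empty_or_nonempty with rfl | ⟨u, hu⟩
    · exact ⟨z, hz, by simpa using hN.trans (hS z hz)⟩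
    · have := card_lt_card_sdiff_image_add hu (hc u hu)
      have := hS u (hBN hu)
      exact ⟨u, hBN hu, by omega⟩
  exact hle.trans (card_le_card (subset_biUnion_of_mem (fun u => S u \ B.image c) hu))

-- Short lists choose first and the palettes avoid their choices; a long list can then avoid the
-- at most `#N - 1` palette colors chosen by the other indices.
theorem exists_isStarColoring_of_few_short (hS : ∀ u ∈ N, s ≤ #(S u))
    (hL : ∀ u ∈ N, (L u).Nonempty) (hd : ∀ u ∈ N, Disjoint (S u) (L u)) (hN : #N ≤ s)
    (hB : #{u ∈ N | #(L u) < #N} + #N ≤ s + 1) : ∃ c f, IsStarColoring N S L c f := by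
  classical
  set B := {u ∈ N | #(L u) < #N}
  have hBN : B ⊆ N := filter_subset _ _
  choose! c₀ hc₀ using hL
  have hLS : ∀ u ∈ N, ∀ x ∈ L u, x ∉ S u := fun u hu _ hx => disjoint_right.1 (hd u hu) hx
  obtain ⟨f, hf, hinj⟩ := exists_injOn_sdiff_image hS hBN
    (fun u hu => hLS u (hBN hu) _ (hc₀ u (hBN hu))) hN hB
  have hc : ∀ u ∈ N, ∃ x ∈ L u, ∀ w ∈ N, f w ≠ x := by
    intro u hu
    by_cases huB : u ∈ B
    · exact ⟨c₀ u, hc₀ u hu, fun w hw h =>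
        (mem_sdiff.1 (hf w hw)).2 (h ▸ mem_image_of_mem c₀ huB)⟩
    · have hlong : #((N.erase u).image f) < #(L u) := by
        have := card_image_le (s := N.erase u) (f := f)
        have := card_erase_add_one hu
        have : ¬ #(L u) < #N := fun h => huB (mem_filter.2 ⟨hu, h⟩)
        omega
      obtain ⟨x, hx, hxf⟩ := exists_mem_notMem_of_card_lt_card hlong
      refine ⟨x, hx, fun w hw h => ?_⟩
      rcases eq_or_ne w u with rfl | hwu
      · exact hLS w hu x hx (h ▸ (mem_sdiff.1 (hf w hw)).1)
      · exact hxf (mem_image.2 ⟨w, mem_erase.2 ⟨hwu, hw⟩, h⟩)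
  choose! c hcL hfc using hc
  exact ⟨c, f, hcL, fun u hu => (mem_sdiff.1 (hf u hu)).1, hinj, fun u hu w hw => hfc w hw u hu⟩

theorem exists_isStarColoring_of_card_le_biUnion [DecidableEq C] (hS : ∀ u ∈ N, s ≤ #(S u))
    (hd : ∀ u ∈ N, Disjoint (S u) (L u)) (hN : 2 * #N ≤ s + 2) {c : ι → C}
    (hc : ∀ u ∈ N, c u ∈ L u) (hU : #N ≤ #(N.biUnion fun u => S u \ N.image c)) :
    ∃ f, IsStarColoring N S L c f := by
  obtain ⟨f, hf, hinj⟩ := exists_injOn_of_card_le_succ (fun u hu => by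
    have := card_lt_card_sdiff_image_add hu (disjoint_right.1 (hd u hu) (hc u hu))
    have := hS u hu
    omega) hU
  exact ⟨f, hc, fun u hu => (mem_sdiff.1 (hf u hu)).1, hinj, fun u hu w hw h =>
    (mem_sdiff.1 (hf u hu)).2 (h ▸ mem_image_of_mem c hw)⟩

theorem exists_isStarColoring_of_one_lt_card (hS : ∀ u ∈ N, s ≤ #(S u))
    (hL : ∀ u ∈ N, (L u).Nonempty) (hd : ∀ u ∈ N, Disjoint (S u) (L u)) (hN : 2 * #N ≤ s + 2)
    {t p : ι} (ht : t ∈ N) (hp : p ∈ N) (hpt : p ≠ t) (htL : 1 < #(L t)) :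
    ∃ c f, IsStarColoring N S L c f := by
  classical
  choose! c hc using hL
  obtain ⟨x, hx, hU⟩ := exists_card_le_card_biUnion_sdiff_insert hS hN ht hp hpt
    (disjoint_right.1 (hd p hp) (hc p hp)) (hd t ht) htL
  refine ⟨_, exists_isStarColoring_of_card_le_biUnion (c := Function.update c t x) hS hd hN ?_ ?_⟩
  · intro u hu
    rcases eq_or_ne u t with rfl | hut
    · rwa [Function.update_self]
    · simpa only [Function.update_of_ne hut] using hc u hu
  · rwa [image_update_eq_insert ht]

end StarColoring

section Discharging

open Finset

/-- The charge that a vertex of degree `d` hands to each of its neighbors: it keeps `q` out of the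
charge `d` if it can, and shares the rest equally. The value at `d = 0`, where `q / d` is `0`, is
irrelevant. -/
noncomputable def surplus (q : ℝ) (d : ℕ) : ℝ :=
  max 0 (1 - q / d)

theorem surplus_nonneg (q : ℝ) (d : ℕ) : 0 ≤ surplus q d :=
  le_max_left _ _

theorem natCast_mul_surplus (q : ℝ) {d : ℕ} (hd : 0 < d) : d * surplus q d = max 0 (d - q) := by
  have hd' : (0 : ℝ) < d := by exact_mod_cast hd
  rw [surplus, mul_max_of_nonneg _ _ hd'.le, mul_zero, mul_sub, mul_one, mul_div_cancel₀ _ hd'.ne']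

theorem card_filter_mul_le_sum_surplus {ι : Type*} (N : Finset ι) (d : ι → ℕ) {q : ℝ} (hq : 0 ≤ q)
    {k : ℕ} (hk : 0 < k) :
    #{u ∈ N | k ≤ d u} * (1 - q / k) ≤ ∑ u ∈ N, surplus q (d u) := by
  have hsurplus : ∀ u ∈ ({u ∈ N | k ≤ d u} : Finset ι), 1 - q / k ≤ surplus q (d u) := by
    intro u hu
    have hku : k ≤ d u := (mem_filter.1 hu).2
    exact le_max_of_le_right (by gcongr)
  calc #{u ∈ N | k ≤ d u} * (1 - q / k)
      = #{u ∈ N | k ≤ d u} • (1 - q / k) := (nsmul_eq_mul _ _).symm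
    _ ≤ ∑ u ∈ N with k ≤ d u, surplus q (d u) := card_nsmul_le_sum _ _ _ hsurplus
    _ ≤ ∑ u ∈ N, surplus q (d u) :=
      sum_le_sum_of_subset_of_nonneg (filter_subset _ _) fun _ _ _ => surplus_nonneg _ _

theorem lt_of_sum_surplus_lt {ι : Type*} {N : Finset ι} {d : ι → ℕ} {q x : ℝ}
    (h : ∑ u ∈ N, surplus q (d u) < q - x) : x < q := by
  have : 0 ≤ ∑ u ∈ N, surplus q (d u) := sum_nonneg fun _ _ => surplus_nonneg _ _
  linarith

variable {V : Type*} {G : SimpleGraph V} {q : ℝ}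

theorem MadLT.mono {H : SimpleGraph V} (hG : MadLT G q) (h : H ≤ G) : MadLT H q := fun K hK =>
  hG { verts := K.verts, Adj := K.Adj, adj_sub := fun hK => h (K.adj_sub hK),
       edge_vert := K.edge_vert, symm := K.symm } hK

variable [Fintype V] [DecidableRel G.Adj]

theorem sum_support_sum_neighborFinset {M : Type*} [AddCommMonoid M] (w : V → M) :
    ∑ v ∈ G.support, ∑ u ∈ G.neighborFinset v, w u = ∑ v ∈ G.support, G.degree v • w v := by
  rw [sum_comm' (t' := G.support.toFinset) (s' := fun u => G.neighborFinset u)]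
  · simp only [sum_const, card_neighborFinset_eq_degree]
  · intro v u
    simp only [Set.mem_toFinset, mem_neighborFinset]
    exact ⟨fun ⟨_, h⟩ => ⟨h.symm, v, h.symm⟩, fun ⟨h, _⟩ => ⟨⟨u, h.symm⟩, h.symm⟩⟩

theorem MadLT.sum_degree_support_lt_s7 (hmad : MadLT G q) (hG : G ≠ ⊥) :
    ∑ v ∈ G.support, (G.degree v : ℝ) < q * #G.support.toFinset := by
  let K : G.Subgraph :=
    { verts := G.support
      Adj := G.Adj
      adj_sub := id
      edge_vert := fun h => ⟨_, h⟩
      symm := G.symm }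
  have hK := hmad K (Set.nonempty_iff_ne_empty.2 (mt G.support_eq_bot_iff.1 hG))
  have hedges : K.edgeSet.ncard = #G.edgeFinset := by
    rw [← Set.ncard_coe_finset, coe_edgeFinset]
    rfl
  rw [hedges, Set.ncard_eq_toFinset_card'] at hK
  calc ∑ v ∈ G.support, (G.degree v : ℝ) = 2 * #G.edgeFinset := by
        exact_mod_cast G.sum_degrees_support_eq_twice_card_edges
    _ < q * #G.support.toFinset := hK

theorem MadLT.exists_sum_surplus_lt (hmad : MadLT G q) (hG : G ≠ ⊥) :
    ∃ v ∈ G.support, ∑ u ∈ G.neighborFinset v, surplus q (G.degree u) < q - G.degree v := by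
  by_contra! hrich
  have hcharge : ∀ v ∈ G.support.toFinset, q + G.degree v • surplus q (G.degree v) ≤
      G.degree v + ∑ u ∈ G.neighborFinset v, surplus q (G.degree u) := by
    intro v hv
    rw [Set.mem_toFinset] at hv
    have hreceived : 0 ≤ ∑ u ∈ G.neighborFinset v, surplus q (G.degree u) :=
      sum_nonneg fun _ _ => surplus_nonneg _ _
    rw [nsmul_eq_mul, natCast_mul_surplus q ((G.degree_pos_iff_mem_support v).2 hv)]
    rcases max_cases 0 ((G.degree v : ℝ) - q) with ⟨h, -⟩ | ⟨h, -⟩ <;>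
      linarith [hrich v hv]
  have htotal := sum_le_sum hcharge
  rw [sum_add_distrib, sum_add_distrib, sum_support_sum_neighborFinset, sum_const,
    nsmul_eq_mul, mul_comm] at htotal
  linarith [hmad.sum_degree_support_lt_s7 hG]

end Discharging

section Palettes

open Finset

-- The bound `12` is what four neighbors need: if all had degree at least `12`, they would hand over
-- a total charge of `4 * (1 - 6 / 12) = 6 - 4`.
theorem exists_isStarColoring_of_sum_surplus_lt {ι C : Type*} [Nonempty C]
    {N : Finset ι} {S L : ι → Finset C} {d : ι → ℕ} {M : ℕ} (hM : 12 ≤ M)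
    (hS : ∀ u ∈ N, 6 ≤ #(S u)) (hd : ∀ u ∈ N, Disjoint (S u) (L u)) (hdM : ∀ u ∈ N, d u ≤ M)
    (hL : ∀ u ∈ N, M < #(L u) + d u) (hsum : ∑ u ∈ N, surplus 6 (d u) < 6 - #N) :
    ∃ c f, IsStarColoring N S L c f := by
  have hLne : ∀ u ∈ N, (L u).Nonempty := fun u hu => card_pos.1 <| by
    have := hL u hu
    have := hdM u hu
    omega
  have hN : #N < 6 := by exact_mod_cast lt_of_sum_surplus_lt hsum
  have hcount : ∀ k : ℕ, 0 < k → #{u ∈ N | k ≤ d u} * (1 - 6 / k : ℝ) < 6 - #N := fun k hk =>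
    (card_filter_mul_le_sum_surplus N d (by norm_num) hk).trans_lt hsum
  by_cases h4 : #N = 4
  · obtain ⟨t, ht, htd⟩ : ∃ t ∈ N, d t < 12 := by
      by_contra! hall
      have := hcount 12 (by norm_num)
      rw [filter_true_of_mem hall, h4] at this
      norm_num at this
    obtain ⟨p, hp, hpt⟩ := exists_mem_ne (by omega : 1 < #N) t
    have := hL t ht
    exact exists_isStarColoring_of_one_lt_card hS hLne hd (by omega) ht hp hpt (by omega)
  · refine exists_isStarColoring_of_few_short hS hLne hd (by omega) ?_
    have hshort : #{u ∈ N | #(L u) < #N} ≤ #N := card_filter_le _ _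
    by_cases h5 : #N = 5
    · have hhigh : #{u ∈ N | 9 ≤ d u} < 3 := by
        have := hcount 9 (by norm_num)
        rw [h5] at this
        have : (#{u ∈ N | 9 ≤ d u} : ℝ) < 3 := by
          norm_num at this
          linarith
        exact_mod_cast this
      have hsub : #{u ∈ N | #(L u) < #N} ≤ #{u ∈ N | 9 ≤ d u} :=
        card_le_card fun u hu => by
          obtain ⟨huN, hshort⟩ := mem_filter.1 hu
          have := hL u huN
          exact mem_filter.2 ⟨huN, by omega⟩
      omega
    · omega

/-- An incidence coloring `φ` of `G`, the color of `(v, vu)` being `φ v u`, in which the incidences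
`(u, uv)` pointing to `v` take their colors from a palette `S v` of size `ℓ` that is avoided by the
incidences `(v, vu)` leaving `v`. -/
structure IsPaletteColoring {V C : Type*} (G : SimpleGraph V) (ℓ : ℕ) (φ : V → V → C)
    (S : V → Finset C) : Prop where
  outInjective : IsOutInjective G φ
  card_palette : ∀ v, #(S v) = ℓ
  mem_palette : ∀ ⦃v u⦄, G.Adj v u → φ v u ∈ S u
  notMem_palette : ∀ ⦃v u⦄, G.Adj v u → φ v u ∉ S v

variable {V : Type*} {G : SimpleGraph V} {ℓ : ℕ}

theorem IsPaletteColoring.hasIncidenceColoring {n : ℕ} {φ : V → V → Fin n} {S : V → Finset (Fin n)}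
    (h : IsPaletteColoring G ℓ φ S) : HasIncidenceColoring G n ℓ := by
  refine ⟨φ, isIncidenceColoring_of_isOutInjective h.outInjective fun v u x hvu hux heq =>
    h.notMem_palette hux (heq ▸ h.mem_palette hvu), fun v => ?_⟩
  rw [← h.card_palette v, ← Set.ncard_coe_finset]
  refine Set.ncard_le_ncard ?_ (S v).finite_toSet
  rintro _ ⟨u, hu, rfl⟩
  exact h.mem_palette hu

theorem HasIncidenceColoring.incChromaticNumber_le {n : ℕ} (h : HasIncidenceColoring G n ℓ) :
    incChromaticNumber G ≤ n := by
  obtain ⟨φ, hφ, -⟩ := h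
  exact Nat.sInf_le ⟨φ, hφ⟩

variable {C : Type*} [Fintype C]

theorem exists_isPaletteColoring_bot [Nonempty C] (hℓ : ℓ ≤ Fintype.card C) :
    ∃ (φ : V → V → C) (S : V → Finset C), IsPaletteColoring (⊥ : SimpleGraph V) ℓ φ S := by
  obtain ⟨T, -, hT⟩ := exists_subset_card_eq (s := (univ : Finset C)) hℓ
  exact ⟨fun _ _ => Classical.arbitrary C, fun _ => T, fun v u hu => hu.elim, fun _ => hT,
    fun _ _ h => h.elim, fun _ _ h => h.elim⟩

open Classical in
/-- The colors still available, in a palette coloring of `G`, for a new incidence `(u, uv)`. -/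
noncomputable def freeColors (G : SimpleGraph V) (φ : V → V → C) (S : V → Finset C) (u : V) :
    Finset C :=
  {x | x ∉ S u ∧ ∀ w, G.Adj u w → φ u w ≠ x}

theorem mem_freeColors {φ : V → V → C} {S : V → Finset C} {u : V} {x : C} :
    x ∈ freeColors G φ S u ↔ x ∉ S u ∧ ∀ w, G.Adj u w → φ u w ≠ x := by
  simp [freeColors]

theorem disjoint_freeColors (G : SimpleGraph V) (φ : V → V → C) (S : V → Finset C) (u : V) :
    Disjoint (S u) (freeColors G φ S u) :=
  disjoint_right.2 fun _ hx => (mem_freeColors.1 hx).1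

theorem card_le_card_freeColors_add (φ : V → V → C) (S : V → Finset C) (u : V)
    [Fintype (G.neighborSet u)] :
    Fintype.card C ≤ #(freeColors G φ S u) + (#(S u) + G.degree u) := by
  classical
  have hcover : univ ⊆ freeColors G φ S u ∪ (S u ∪ (G.neighborFinset u).image (φ u)) := by
    intro x _
    simp only [mem_union, mem_freeColors, mem_image, mem_neighborFinset]
    by_contra! h
    obtain ⟨w, hw, hwx⟩ := h.1 h.2.1
    exact h.2.2 w hw hwx
  calc Fintype.card C = #univ := card_univ.symm
    _ ≤ #(freeColors G φ S u ∪ (S u ∪ (G.neighborFinset u).image (φ u))) := card_le_card hcover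
    _ ≤ #(freeColors G φ S u) + (#(S u) + G.degree u) := by
      grw [card_union_le, card_union_le, card_image_le, card_neighborFinset_eq_degree]

theorem degree_deleteIncidenceSet_lt [Fintype V] [DecidableEq V] [DecidableRel G.Adj] {v u : V}
    (h : G.Adj v u) : (G.deleteIncidenceSet v).degree u < G.degree u := by
  refine card_lt_card ((ssubset_iff_of_subset ?_).2 ⟨v, ?_, ?_⟩)
  · intro w hw
    rw [mem_neighborFinset] at hw ⊢
    exact G.deleteIncidenceSet_le v hw
  · simpa only [mem_neighborFinset] using h.symm
  · simp [deleteIncidenceSet_adj]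

theorem IsStarColoring.exists_palette {ι : Type*} {N : Finset ι} {S L : ι → Finset C}
    {c f : ι → C} (h : IsStarColoring N S L c f) (hN : #N ≤ ℓ) (hC : ℓ + #N ≤ Fintype.card C) :
    ∃ T : Finset C, #T = ℓ ∧ ∀ u ∈ N, c u ∈ T ∧ f u ∉ T := by
  classical
  have hsub : N.image c ⊆ (N.image f)ᶜ := by
    intro x hx
    obtain ⟨u, hu, rfl⟩ := mem_image.1 hx
    simpa only [mem_compl, mem_image, not_exists, not_and] using
      fun w hw => h.out_ne_in w hw u hu
  have hcard := card_image_le (s := N) (f := f)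
  obtain ⟨T, hcT, hTf, hT⟩ := exists_subsuperset_card_eq hsub (card_image_le.trans hN)
    (by rw [card_compl]; omega)
  exact ⟨T, hT, fun u hu => ⟨hcT (mem_image_of_mem c hu),
    fun huT => mem_compl.1 (hTf huT) (mem_image_of_mem f hu)⟩⟩

/-- The coloring `φ` with the colors of the incidences around `v` replaced: `(u, uv)` gets `c u`
and `(v, vu)` gets `f u`. -/
def recolorStar [DecidableEq V] (φ : V → V → C) (v : V) (c f : V → C) (x y : V) : C :=
  if x = v then f y else if y = v then c x else φ x y

section Recolor

variable [DecidableEq V] {v : V} [Fintype (G.neighborSet v)] {φ : V → V → C} {S : V → Finset C}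
  {c f : V → C} (h : IsPaletteColoring (G.deleteIncidenceSet v) ℓ φ S)
  (hcf : IsStarColoring (G.neighborFinset v) S (freeColors (G.deleteIncidenceSet v) φ S) c f)
include h hcf

theorem isOutInjective_recolorStar : IsOutInjective G (recolorStar φ v c f) := by
  have hfree : ∀ ⦃x⦄, G.Adj x v → ∀ ⦃z⦄, z ≠ v → G.Adj x z → φ x z ≠ c x := by
    intro x hxv z hz hxz
    have hx := hcf.in_mem x (by simpa only [mem_neighborFinset] using hxv.symm)
    exact (mem_freeColors.1 hx).2 z (deleteIncidenceSet_adj.2 ⟨hxz, hxv.ne, hz⟩)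
  intro x y hxy z hxz heq
  rw [mem_neighborSet] at hxy hxz
  rcases eq_or_ne x v with rfl | hx
  · simp only [recolorStar, if_true] at heq
    exact hcf.out_injOn (by simpa using hxy) (by simpa using hxz) heq
  · simp only [recolorStar, hx, if_false] at heq
    rcases eq_or_ne y v with rfl | hy
    · rcases eq_or_ne z y with rfl | hz
      · rfl
      · simp only [if_true, hz, if_false] at heq
        exact (hfree hxy hz hxz heq.symm).elim
    · rcases eq_or_ne z v with rfl | hz
      · simp only [if_true, hy, if_false] at heq
        exact (hfree hxz hy hxy heq).elim
      · simp only [hy, hz, if_false] at heq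
        exact h.outInjective x (deleteIncidenceSet_adj.2 ⟨hxy, hx, hy⟩)
          (deleteIncidenceSet_adj.2 ⟨hxz, hx, hz⟩) heq

theorem isPaletteColoring_recolorStar {T : Finset C} (hT : #T = ℓ)
    (hcT : ∀ u ∈ G.neighborFinset v, c u ∈ T ∧ f u ∉ T) :
    IsPaletteColoring G ℓ (recolorStar φ v c f) (Function.update S v T) := by
  have hin : ∀ ⦃x⦄, G.Adj x v → c x ∈ T ∧ c x ∉ S x := fun x hx => by
    have hxN : x ∈ G.neighborFinset v := by simpa only [mem_neighborFinset] using hx.symm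
    exact ⟨(hcT x hxN).1, (mem_freeColors.1 (hcf.in_mem x hxN)).1⟩
  have hout : ∀ ⦃y⦄, G.Adj v y → f y ∈ S y ∧ f y ∉ T := fun y hy => by
    have hyN : y ∈ G.neighborFinset v := by simpa only [mem_neighborFinset] using hy
    exact ⟨hcf.out_mem y hyN, (hcT y hyN).2⟩
  have hpalette : ∀ ⦃x y⦄, G.Adj x y → recolorStar φ v c f x y ∈ Function.update S v T y ∧
      recolorStar φ v c f x y ∉ Function.update S v T x := by
    intro x y hxy
    rcases eq_or_ne x v with rfl | hx
    · simpa [recolorStar, hxy.ne'] using hout hxy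
    · rcases eq_or_ne y v with rfl | hy
      · simpa [recolorStar, hx] using hin hxy
      · have hxy' := deleteIncidenceSet_adj.2 ⟨hxy, hx, hy⟩
        simpa [recolorStar, hx, hy] using
          And.intro (h.mem_palette hxy') (h.notMem_palette hxy')
  refine ⟨isOutInjective_recolorStar h hcf, fun x => ?_, fun x y hxy => (hpalette hxy).1,
    fun x y hxy => (hpalette hxy).2⟩
  rcases eq_or_ne x v with rfl | hx
  · rwa [Function.update_self]
  · rw [Function.update_of_ne hx, h.card_palette]

end Recolor

theorem exists_isPaletteColoring [Fintype V] [hdec : DecidableRel G.Adj] {M : ℕ} (hM : 12 ≤ M)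
    (hC : M + 6 ≤ Fintype.card C) (hmad : MadLT G 6) (hdeg : ∀ v, G.degree v ≤ M) :
    ∃ (φ : V → V → C) (S : V → Finset C), IsPaletteColoring G 6 φ S := by
  classical
  have : Nonempty C := Fintype.card_pos_iff.1 (by omega)
  induction G using WellFoundedLT.induction generalizing hdec with
  | ind G ih =>
  rcases eq_or_ne G ⊥ with rfl | hG
  · exact exists_isPaletteColoring_bot (by omega)
  obtain ⟨v, hv, hpoor⟩ := hmad.exists_sum_surplus_lt hG
  set H := G.deleteIncidenceSet v
  have hHG : H ≤ G := G.deleteIncidenceSet_le v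
  have hne : H ≠ G := by
    intro h
    have hvH : v ∈ H.support := by rwa [h]
    exact (support_deleteIncidenceSet_subset G v hvH).2 rfl
  obtain ⟨φ, S, hφ⟩ := ih H (hHG.lt_of_ne hne) (hmad.mono hHG) fun u =>
    (degree_le_of_le hHG).trans (hdeg u)
  have hfree : ∀ u ∈ G.neighborFinset v, M < #(freeColors H φ S u) + G.degree u := by
    intro u hu
    have hlt : H.degree u < G.degree u :=
      degree_deleteIncidenceSet_lt ((G.mem_neighborFinset v u).1 hu)
    have hcard := card_le_card_freeColors_add (G := H) φ S u
    rw [hφ.card_palette] at hcard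
    omega
  obtain ⟨c, f, hcf⟩ := exists_isStarColoring_of_sum_surplus_lt hM
    (fun u _ => (hφ.card_palette u).ge) (fun u _ => disjoint_freeColors H φ S u)
    (fun u _ => hdeg u) hfree hpoor
  have hv6 : #(G.neighborFinset v) < 6 := by exact_mod_cast lt_of_sum_surplus_lt hpoor
  obtain ⟨T, hT, hcT⟩ := hcf.exists_palette hv6.le (by omega)
  exact ⟨_, _, isPaletteColoring_recolorStar hφ hcf hT hcT⟩

theorem MadLT.hasIncidenceColoring [Fintype V] [DecidableRel G.Adj] (hmad : MadLT G 6) {M : ℕ}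
    (hM : 12 ≤ M) (hdeg : ∀ v, G.degree v ≤ M) : HasIncidenceColoring G (M + 6) 6 := by
  obtain ⟨φ, S, h⟩ := exists_isPaletteColoring (C := Fin (M + 6)) hM (by simp) hmad hdeg
  exact h.hasIncidenceColoring

end Palettes

theorem incidence_chromatic_mad_lt_six {V : Type*} [Fintype V] (G : SimpleGraph V)
    [DecidableRel G.Adj] (hmad : MadLT G 6) (hΔ : 12 ≤ G.maxDegree ∨ G.maxDegree ≤ 6) :
    incChromaticNumber G ≤ G.maxDegree + 6 := by
  rcases hΔ with hΔ | hΔ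
  · exact (hmad.hasIncidenceColoring hΔ G.degree_le_maxDegree).incChromaticNumber_le
  · exact Nat.sInf_le <| exists_isIncidenceColoring_of_two_mul_le (d := max 1 G.maxDegree)
      (fun v => (G.degree_le_maxDegree v).trans (le_max_right _ _)) (by omega) (by omega)
end
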